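/- Define L₁ⁿ(x,y) = J₁ⁿ(x,y)·J₁ⁿ(y,x) − ∂_y J₁ⁿ(x,y)·(∫_x^y J₁ⁿ(u,x) du − (1/2)·sign(y − x)), where ∂_y J₁ⁿ is the derivative in the second variable. There is C > 0 such that for every even integer n ≥ 2 and all x, y ∈ [−2·n^{2/3}, ∞) with x ≠ y, x ≠ 0, y ≠ 0: |L₁ⁿ(x,y)| ≤ C·(Ĝ_{−1/4,1/2,1}(x,y) + Ĝ_{0,1/4,1}(x,y) + Ĝ_{1/4,1/4,0}(x,y) + Ĝ_{−3/4,1/4,1}(x,y) + Ĝ_{−1/2,1/2,2}(x,y) + Ĝ_{0,0,2}(x,y)). -/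

import Mathlib

open MeasureTheory Filter Set

noncomputable section

/-- The Airy function `Ai(x) = (1/π)·lim_{b→∞} ∫_0^b cos(t³/3 + x·t) dt`. -/
def Ai (x : ℝ) : ℝ :=
  (1 / Real.pi) *
    limUnder Filter.atTop (fun b : ℝ => ∫ t in (0:ℝ)..b, Real.cos (t ^ 3 / 3 + x * t))

/-- The Airy kernel. -/
def KAi (x y : ℝ) : ℝ :=
  if x = y then (deriv Ai x) ^ 2 - x * (Ai x) ^ 2
  else (Ai x * deriv Ai y - deriv Ai x * Ai y) / (x - y)

/-- One-point correlation function of the Airy₂ random point field. -/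
def rho (x : ℝ) : ℝ := (deriv Ai x) ^ 2 - x * (Ai x) ^ 2

/-- Probabilists' Hermite polynomial `Ĥ_m(x) = (−1)^m e^{x²/2} (d/dx)^m e^{−x²/2}`. -/
def hermiteP (m : ℕ) (x : ℝ) : ℝ :=
  (-1 : ℝ) ^ m * Real.exp (x ^ 2 / 2) * iteratedDeriv m (fun t => Real.exp (-t ^ 2 / 2)) x

/-- Normalized oscillator function `φ_m`. -/
def osc (m : ℕ) (x : ℝ) : ℝ :=
  (2 * Real.pi) ^ (-(1:ℝ)/4) * ((m.factorial : ℝ)) ^ (-(1:ℝ)/2) *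
    Real.exp (-x ^ 2 / 4) * hermiteP m x

/-- `ψ_mⁿ(x) = n^{1/12}·φ_m(2√n + n^{−1/6}·x)`. -/
def psiUp (n m : ℕ) (x : ℝ) : ℝ :=
  (n : ℝ) ^ ((1:ℝ)/12) * osc m (2 * Real.sqrt n + (n : ℝ) ^ (-(1:ℝ)/6) * x)

/-- `ψ_n = ψ_nⁿ`. -/
def psiN (n : ℕ) : ℝ → ℝ := psiUp n n

/-- The finite-`n` Airy kernel. -/
def KAiN (n : ℕ) (x y : ℝ) : ℝ :=
  if x = y then
    (deriv (psiN n) x) ^ 2 - psiN n x * deriv (deriv (psiN n)) x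
      - (1 / (2 * (n : ℝ) ^ ((1:ℝ)/3))) * (psiN n x) ^ 2
  else
    (psiN n x * deriv (psiN n) y - deriv (psiN n) x * psiN n y) / (x - y)
      - (1 / (2 * (n : ℝ) ^ ((1:ℝ)/3))) * (psiN n x * psiN n y)

/-- `(εf)(x) = (1/2)·∫_ℝ sign(x − y)·f(y) dy`. -/
def epsF (f : ℝ → ℝ) (x : ℝ) : ℝ := (1/2) * ∫ y : ℝ, Real.sign (x - y) * f y

/-- `εψ_n`. -/
def epsPsi (n : ℕ) : ℝ → ℝ := epsF (psiN n)

/-- `J₁(x,y) = K_Ai(x,y) + (1/2)·Ai(x)·(1 − ∫_y^∞ Ai(u) du)`. -/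
def J1 (x y : ℝ) : ℝ := KAi x y + (1/2) * Ai x * (1 - ∫ u in Set.Ioi y, Ai u)

/-- Scalar part of the quaternion product of Airy₁ kernels. -/
def L1 (x y : ℝ) : ℝ :=
  J1 x y * J1 y x -
    deriv (fun v => J1 x v) y * ((∫ u in x..y, J1 u x) - (1/2) * Real.sign (y - x))

/-- `J₁ⁿ(x,y) = K_Aiⁿ(x,y) + (1/2)·ψ_{n−1}ⁿ(x)·(εψ_n)(y)`. -/
def J1N (n : ℕ) (x y : ℝ) : ℝ :=
  KAiN n x y + (1/2) * psiUp n (n - 1) x * epsPsi n y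

/-- Scalar part of the quaternion product of finite-`n` Airy₁ kernels. -/
def L1N (n : ℕ) (x y : ℝ) : ℝ :=
  J1N n x y * J1N n y x -
    deriv (fun v => J1N n x v) y * ((∫ u in x..y, J1N n u x) - (1/2) * Real.sign (y - x))

/-- `ρ̂(x) = (1/π)·√(−x)` for `x < 0`, and `0` otherwise. -/
def rhoHat (x : ℝ) : ℝ := if x < 0 then Real.sqrt (-x) / Real.pi else 0

/-- `ρ̂ⁿ(x) = (1/π)·√(−x·(1 + x/(4·n^{2/3})))` on `(−4n^{2/3}, 0)`, and `0` otherwise. -/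
def rhoHatN (n : ℕ) (x : ℝ) : ℝ :=
  if -(4 * (n : ℝ) ^ ((2:ℝ)/3)) < x ∧ x < 0 then
    Real.sqrt (-x * (1 + x / (4 * (n : ℝ) ^ ((2:ℝ)/3)))) / Real.pi
  else 0

/-- `G_{a,b,c}(x,y) = |x|^{−a}·|y|^{−b}·|x−y|^{−c}`. -/
def Gf (a b c : ℝ) (x y : ℝ) : ℝ := |x| ^ (-a) * |y| ^ (-b) * |x - y| ^ (-c)

/-- `Ĝ_{a,b,c}(x,y) = G_{a,b,c}(x,y) + G_{a,b,c}(y,x)`. -/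
def Ghat (a b c : ℝ) (x y : ℝ) : ℝ := Gf a b c x y + Gf a b c y x

/-- Soft-edge one-point correlation function of the `n`-point GUE ensemble. -/
def rhoN (n : ℕ) (x : ℝ) : ℝ :=
  (deriv (psiN n) x) ^ 2 - (x ^ 2 / (4 * (n : ℝ) ^ ((2:ℝ)/3)) + x) * (psiN n x) ^ 2

end

/-
With `ν = n ^ (1 / 3)` and `n` even, `f = ψ_n` solves `f'' = V f` for the potential
`V x = x + x ^ 2 / (4 * ν ^ 2) - 1 / (2 * ν)`, decays at `+∞`, and is even about the centre
`-2 * ν ^ 2`, where it is at most of size `ν ^ (-1 / 2)`. A Liouville–Green energy, corrected to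
be an adiabatic invariant in the oscillatory region, gives `|f| ≲ 1 / w` and `|f'| ≲ w` for
`w x = (1 + |x|) ^ (1 / 4)`, uniformly in `n`. Integration by parts from `f = f'' / V` then
captures the cancellation in the integrals of `f` and of the Christoffel–Darboux kernel, and the
symmetry turns `ε f` into an integral from the centre. The bound this gives for `L₁ⁿ` in terms of
`w x`, `w y` and `|x - y|` is comparable to the sum of the `Ĝ` when `|x|` and `|y|` are large; it
is dominated by `Ĝ_{0,0,2}` when both are bounded, and by `Ĝ_{1/4,1/4,0}` when only one is.
-/

section Calculus

lemma norm_sub_le_of_norm_deriv_le {E : Type*} [NormedAddCommGroup E] [NormedSpace ℝ E]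
    {h h' : ℝ → E} {R R' : ℝ → ℝ} {a b : ℝ} (hab : a ≤ b)
    (hh : ∀ u ∈ Icc a b, HasDerivAt h (h' u) u) (hR : ∀ u ∈ Icc a b, HasDerivAt R (R' u) u)
    (hle : ∀ u ∈ Icc a b, ‖h' u‖ ≤ R' u) : ‖h b - h a‖ ≤ R b - R a :=
  image_norm_le_of_norm_deriv_right_le_deriv_boundary' (f := fun u => h u - h a)
    (B := fun u => R u - R a)
    (fun u hu => ((hh u hu).sub_const _).continuousAt.continuousWithinAt)
    (fun u hu => ((hh u (Ico_subset_Icc_self hu)).sub_const _).hasDerivWithinAt) (by simp)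
    (fun u hu => ((hR u hu).sub_const _).continuousAt.continuousWithinAt)
    (fun u hu => ((hR u (Ico_subset_Icc_self hu)).sub_const _).hasDerivWithinAt)
    (fun u hu => hle u (Ico_subset_Icc_self hu)) (right_mem_Icc.2 hab)

lemma antitoneOn_of_hasDerivAt_nonpos {g g' : ℝ → ℝ} {s : Set ℝ} (hs : Convex ℝ s)
    (hg : ∀ u ∈ s, HasDerivAt g (g' u) u) (hle : ∀ u ∈ s, g' u ≤ 0) : AntitoneOn g s :=
  antitoneOn_of_hasDerivWithinAt_nonpos hs
    (fun u hu => (hg u hu).continuousAt.continuousWithinAt)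
    (fun u hu => (hg u (interior_subset hu)).hasDerivWithinAt)
    (fun u hu => hle u (interior_subset hu))

lemma abs_integral_le_of_abs_le_div_one_add_sq {F : ℝ → ℝ} {C a b : ℝ} (hC : 0 ≤ C) (hab : a ≤ b)
    (h : ∀ u ∈ Icc a b, |F u| ≤ C / (1 + u ^ 2)) : |∫ u in a..b, F u| ≤ 4 * C := by
  have hcont : Continuous fun u : ℝ => C / (1 + u ^ 2) :=
    continuous_const.div (by fun_prop) fun u => by positivity
  calc |∫ u in a..b, F u|
      ≤ ∫ u in a..b, C / (1 + u ^ 2) :=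
        intervalIntegral.norm_integral_le_of_norm_le (f := F) hab
          (ae_of_all volume fun u hu => h u (Ioc_subset_Icc_self hu)) (hcont.intervalIntegrable _ _)
    _ = C * (Real.arctan b - Real.arctan a) := by
        simp only [div_eq_mul_one_div C, intervalIntegral.integral_const_mul,
          integral_one_div_one_add_sq]
    _ ≤ C * 4 := by
        gcongr
        linarith [Real.arctan_lt_pi_div_two b, Real.neg_pi_div_two_lt_arctan a, Real.pi_le_four]
    _ = 4 * C := mul_comm _ _

lemma integral_min_add_integral_max {F : ℝ → ℝ} (hF : Continuous F) (a b c : ℝ) :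
    (∫ u in min a c..min b c, F u) + ∫ u in max a c..max b c, F u = ∫ u in a..b, F u := by
  have hadd (p q r : ℝ) := intervalIntegral.integral_add_adjacent_intervals
    (hF.intervalIntegrable (μ := volume) p q) (hF.intervalIntegrable q r)
  have hadd' (p q r : ℝ) := (add_comm _ _).trans (hadd p q r)
  rcases le_total a c with ha | ha <;> rcases le_total b c with hb | hb <;>
    simp [ha, hb, hadd, hadd']

end Calculus

section LiouvilleGreen

variable {f q k k' : ℝ → ℝ} {a b x : ℝ}

/-- The Liouville–Green (WKB) energy `√q f² + f'² / √q` of a solution of `f'' = -q f`. -/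
noncomputable def wkbEnergy (q f : ℝ → ℝ) (x : ℝ) : ℝ := √(q x) * f x ^ 2 + deriv f x ^ 2 / √(q x)

/-- The Liouville–Green energy with the first-order correction that makes it an adiabatic
invariant; `k` stands for `q' / q ^ (3 / 2)`. -/
noncomputable def adiabaticEnergy (k q f : ℝ → ℝ) (x : ℝ) : ℝ :=
  wkbEnergy q f x + k x / 2 * (f x * deriv f x)

lemma two_mul_abs_mul_deriv_le_wkbEnergy (hq : 0 < q x) :
    2 * |f x * deriv f x| ≤ wkbEnergy q f x := by
  have : 0 < √(q x) := Real.sqrt_pos.2 hq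
  have hsq : wkbEnergy q f x - 2 * |f x * deriv f x|
      = (√(q x) * |f x| - |deriv f x|) ^ 2 / √(q x) := by
    rw [wkbEnergy, abs_mul, ← sq_abs (f x), ← sq_abs (deriv f x)]
    field_simp
    ring
  have : 0 ≤ (√(q x) * |f x| - |deriv f x|) ^ 2 / √(q x) := by positivity
  linarith

lemma abs_adiabaticEnergy_sub_wkbEnergy_le (hq : 0 < q x) (hk : |k x| ≤ 1) :
    |adiabaticEnergy k q f x - wkbEnergy q f x| ≤ wkbEnergy q f x / 4 := by
  rw [adiabaticEnergy, add_sub_cancel_left, abs_mul, abs_div, abs_two]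
  calc |k x| / 2 * |f x * deriv f x| ≤ 1 / 2 * |f x * deriv f x| := by gcongr
    _ ≤ wkbEnergy q f x / 4 := by linarith [two_mul_abs_mul_deriv_le_wkbEnergy (f := f) hq]

lemma hasDerivAt_adiabaticEnergy (hf : HasDerivAt f (deriv f x) x)
    (hf' : HasDerivAt (deriv f) (-q x * f x) x) (hq : 0 < q x)
    (hq' : HasDerivAt q (k x * √(q x) ^ 3) x) (hk : HasDerivAt k (k' x) x) :
    HasDerivAt (adiabaticEnergy k q f) (k' x / 2 * (f x * deriv f x)) x := by
  have hr : √(q x) ≠ 0 := (Real.sqrt_pos.2 hq).ne'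
  have hsq : q x = √(q x) ^ 2 := (Real.sq_sqrt hq.le).symm
  have hsqrt : HasDerivAt (fun u => √(q u)) (k x * √(q x) ^ 2 / 2) x :=
    (hq'.sqrt hq.ne').congr_deriv (by field_simp)
  refine (((hsqrt.mul (hf.pow 2)).add ((hf'.pow 2).div hsqrt hr)).add
    ((hk.div_const 2).mul (hf.mul hf'))).congr_deriv ?_
  simp only [Pi.pow_apply, Pi.mul_apply]
  rw [show -q x = -√(q x) ^ 2 by rw [← hsq]]
  field_simp
  ring

-- The derivative of the product is `k' e ^ (k / 3)` times a combination which is nonnegative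
-- because the correction is at most a quarter of the energy.
lemma antitoneOn_adiabaticEnergy_mul_exp (hf : ∀ u ∈ Icc a b, HasDerivAt f (deriv f u) u)
    (hf' : ∀ u ∈ Icc a b, HasDerivAt (deriv f) (-q u * f u) u) (hq : ∀ u ∈ Icc a b, 0 < q u)
    (hq' : ∀ u ∈ Icc a b, HasDerivAt q (k u * √(q u) ^ 3) u)
    (hk : ∀ u ∈ Icc a b, HasDerivAt k (k' u) u) (hk' : ∀ u ∈ Icc a b, k' u ≤ 0)
    (hk1 : ∀ u ∈ Icc a b, |k u| ≤ 1) :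
    AntitoneOn (fun u => adiabaticEnergy k q f u * Real.exp (k u / 3)) (Icc a b) := by
  refine antitoneOn_of_hasDerivAt_nonpos (convex_Icc a b) (g' := fun u =>
    k' u * ((f u * deriv f u) / 2 + adiabaticEnergy k q f u / 3) * Real.exp (k u / 3))
    (fun u hu => ?_) (fun u hu => ?_)
  · exact ((hasDerivAt_adiabaticEnergy (hf u hu) (hf' u hu) (hq u hu) (hq' u hu) (hk u hu)).mul
      ((hk u hu).div_const 3).exp).congr_deriv (by ring)
  · have hprod := two_mul_abs_mul_deriv_le_wkbEnergy (f := f) (hq u hu)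
    have hcorr := abs_le.1 (abs_adiabaticEnergy_sub_wkbEnergy_le (f := f) (hq u hu) (hk1 u hu))
    have hneg := neg_abs_le (f u * deriv f u)
    exact mul_nonpos_of_nonpos_of_nonneg
      (mul_nonpos_of_nonpos_of_nonneg (hk' u hu) (by linarith [hcorr.1])) (Real.exp_pos _).le

lemma wkbEnergy_le_five_mul (hf : ∀ u ∈ Icc a b, HasDerivAt f (deriv f u) u)
    (hf' : ∀ u ∈ Icc a b, HasDerivAt (deriv f) (-q u * f u) u) (hq : ∀ u ∈ Icc a b, 0 < q u)
    (hq' : ∀ u ∈ Icc a b, HasDerivAt q (k u * √(q u) ^ 3) u)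
    (hk : ∀ u ∈ Icc a b, HasDerivAt k (k' u) u) (hk' : ∀ u ∈ Icc a b, k' u ≤ 0)
    (hk1 : ∀ u ∈ Icc a b, |k u| ≤ 1) (hab : a ≤ b) : wkbEnergy q f b ≤ 5 * wkbEnergy q f a := by
  have ha := left_mem_Icc.2 hab
  have hb := right_mem_Icc.2 hab
  have hle : adiabaticEnergy k q f b * Real.exp (k b / 3)
      ≤ adiabaticEnergy k q f a * Real.exp (k a / 3) :=
    antitoneOn_adiabaticEnergy_mul_exp hf hf' hq hq' hk hk' hk1 ha hb hab
  have hca := abs_le.1 (abs_adiabaticEnergy_sub_wkbEnergy_le (f := f) (hq a ha) (hk1 a ha))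
  have hcb := abs_le.1 (abs_adiabaticEnergy_sub_wkbEnergy_le (f := f) (hq b hb) (hk1 b hb))
  have hEa : 0 ≤ wkbEnergy q f a := by unfold wkbEnergy; positivity
  have : 0 ≤ wkbEnergy q f b := by unfold wkbEnergy; positivity
  have hexp : Real.exp (k a / 3) ≤ 3 * Real.exp (k b / 3) := by
    have h3 : Real.exp (k a / 3 - k b / 3) ≤ 3 :=
      (Real.exp_le_exp.2 (by linarith [(abs_le.1 (hk1 a ha)).2, (abs_le.1 (hk1 b hb)).1])).trans
        Real.exp_one_lt_three.le
    rwa [Real.exp_sub, div_le_iff₀ (Real.exp_pos _)] at h3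
  have hmul : 3 / 4 * wkbEnergy q f b * Real.exp (k b / 3)
      ≤ 5 / 4 * wkbEnergy q f a * 3 * Real.exp (k b / 3) :=
    calc 3 / 4 * wkbEnergy q f b * Real.exp (k b / 3)
        ≤ adiabaticEnergy k q f b * Real.exp (k b / 3) := by gcongr; linarith [hcb.1]
      _ ≤ adiabaticEnergy k q f a * Real.exp (k a / 3) := hle
      _ ≤ 5 / 4 * wkbEnergy q f a * (3 * Real.exp (k b / 3)) := by gcongr; linarith [hca.2]
      _ = _ := by ring
  linarith [le_of_mul_le_mul_right hmul (Real.exp_pos _)]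

end LiouvilleGreen

section SecondOrder

variable {f V V' : ℝ → ℝ} {a b κ M x : ℝ}

lemma sq_add_deriv_sq_le (hf : ∀ u ∈ Icc a b, HasDerivAt f (deriv f u) u)
    (hf' : ∀ u ∈ Icc a b, HasDerivAt (deriv f) (V u * f u) u)
    (hV : ∀ u ∈ Icc a b, |1 + V u| ≤ M) (hab : a ≤ b) :
    f b ^ 2 + deriv f b ^ 2 ≤ (f a ^ 2 + deriv f a ^ 2) * Real.exp (M * (b - a)) := by
  have hanti : AntitoneOn (fun u => (f u ^ 2 + deriv f u ^ 2) * Real.exp (-M * u)) (Icc a b) := by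
    refine antitoneOn_of_hasDerivAt_nonpos (convex_Icc _ _)
      (g' := fun u => ((1 + V u) * (2 * (f u * deriv f u)) - M * (f u ^ 2 + deriv f u ^ 2))
        * Real.exp (-M * u)) (fun u hu => ?_) (fun u hu => ?_)
    · refine ((((hf u hu).pow 2).add ((hf' u hu).pow 2)).mul
        ((hasDerivAt_id u).const_mul (-M)).exp).congr_deriv ?_
      simp only [id, Pi.add_apply, Pi.pow_apply]
      ring
    · have hamgm : |2 * (f u * deriv f u)| ≤ f u ^ 2 + deriv f u ^ 2 :=
        abs_le.2 ⟨by nlinarith [sq_nonneg (f u + deriv f u)],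
          by nlinarith [sq_nonneg (f u - deriv f u)]⟩
      have hprod : (1 + V u) * (2 * (f u * deriv f u)) ≤ M * (f u ^ 2 + deriv f u ^ 2) := by
        refine (le_abs_self _).trans ?_
        rw [abs_mul]
        exact mul_le_mul (hV u hu) hamgm (abs_nonneg _) ((abs_nonneg _).trans (hV u hu))
      exact mul_nonpos_of_nonpos_of_nonneg (by linarith) (Real.exp_pos _).le
  have hle := hanti (left_mem_Icc.2 hab) (right_mem_Icc.2 hab) hab
  rw [mul_sub, Real.exp_sub, ← mul_div_assoc, le_div_iff₀ (Real.exp_pos _)]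
  simp only [neg_mul, Real.exp_neg, ← div_eq_mul_inv] at hle
  rwa [div_le_div_iff₀ (Real.exp_pos _) (Real.exp_pos _)] at hle

lemma mul_deriv_nonpos_of_tendsto (hf : ∀ u ∈ Ici a, HasDerivAt f (deriv f u) u)
    (hf' : ∀ u ∈ Ici a, HasDerivAt (deriv f) (V u * f u) u) (hV : ∀ u ∈ Ici a, 0 ≤ V u)
    (hlim : Tendsto (fun u => f u * deriv f u) atTop (nhds 0)) (hx : a ≤ x) :
    f x * deriv f x ≤ 0 := by
  have hanti : AntitoneOn (fun u => -(f u * deriv f u)) (Ici a) :=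
    antitoneOn_of_hasDerivAt_nonpos (convex_Ici a) (g' := fun u => -(deriv f u ^ 2 + V u * f u ^ 2))
      (fun u hu => ((hf u hu).mul (hf' u hu)).neg.congr_deriv (by ring))
      (fun u hu => neg_nonpos.2 (add_nonneg (sq_nonneg _) (mul_nonneg (hV u hu) (sq_nonneg _))))
  refine ge_of_tendsto hlim ?_
  filter_upwards [eventually_ge_atTop x] with u hu
  exact neg_le_neg_iff.1 (hanti hx (hx.trans hu) hu)

lemma mul_sq_le_deriv_sq_of_tendsto
    (hf : ∀ u ∈ Ici a, HasDerivAt f (deriv f u) u)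
    (hf' : ∀ u ∈ Ici a, HasDerivAt (deriv f) (V u * f u) u)
    (hVd : ∀ u ∈ Ici a, HasDerivAt V (V' u) u) (hV' : ∀ u ∈ Ici a, 0 ≤ V' u)
    (hlim : Tendsto (fun u => deriv f u ^ 2 - V u * f u ^ 2) atTop (nhds 0)) (hx : a ≤ x) :
    V x * f x ^ 2 ≤ deriv f x ^ 2 := by
  have hanti : AntitoneOn (fun u => deriv f u ^ 2 - V u * f u ^ 2) (Ici a) := by
    refine antitoneOn_of_hasDerivAt_nonpos (convex_Ici a) (g' := fun u => -(V' u * f u ^ 2))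
      (fun u hu => ?_) (fun u hu => neg_nonpos.2 (mul_nonneg (hV' u hu) (sq_nonneg _)))
    refine (((hf' u hu).pow 2).sub ((hVd u hu).mul ((hf u hu).pow 2))).congr_deriv ?_
    simp only [Pi.pow_apply]
    ring
  refine sub_nonneg.1 (le_of_tendsto hlim ?_)
  filter_upwards [eventually_ge_atTop x] with u hu
  exact hanti hx (hx.trans hu) hu

lemma sq_le_mul_exp_of_logDeriv_le (hκ : 0 ≤ κ) (hf : ∀ u ∈ Ici a, HasDerivAt f (deriv f u) u)
    (hff' : ∀ u ∈ Ici a, f u * deriv f u ≤ 0)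
    (hκf : ∀ u ∈ Ici a, (κ * f u) ^ 2 ≤ deriv f u ^ 2) (hx : a ≤ x) :
    f x ^ 2 ≤ f a ^ 2 * Real.exp (2 * κ * (a - x)) := by
  have hanti : AntitoneOn (fun u => f u ^ 2 * Real.exp (2 * κ * u)) (Ici a) := by
    refine antitoneOn_of_hasDerivAt_nonpos (convex_Ici a)
      (g' := fun u => 2 * (f u * deriv f u + κ * f u ^ 2) * Real.exp (2 * κ * u))
      (fun u hu => ?_) (fun u hu => ?_)
    · refine (((hf u hu).pow 2).mul ((hasDerivAt_id u).const_mul (2 * κ)).exp).congr_deriv ?_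
      simp only [id, Pi.pow_apply]
      ring
    · have habs : κ * |f u| ≤ |deriv f u| := by
        simpa [abs_mul, abs_of_nonneg hκ] using sq_le_sq.1 (hκf u hu)
      have hprod : f u * deriv f u + κ * f u ^ 2 = |f u| * (κ * |f u| - |deriv f u|) := by
        rw [mul_sub, ← abs_mul, abs_of_nonpos (hff' u hu), ← sq_abs (f u)]
        ring
      refine mul_nonpos_of_nonpos_of_nonneg ?_ (Real.exp_pos _).le
      rw [hprod]
      linarith [mul_nonpos_of_nonneg_of_nonpos (abs_nonneg (f u)) (sub_nonpos.2 habs)]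
  have hle := hanti self_mem_Ici hx hx
  rwa [mul_sub, Real.exp_sub, ← mul_div_assoc, le_div_iff₀ (Real.exp_pos _)]

lemma antitoneOn_deriv_sq (hf' : ∀ u ∈ Ici a, HasDerivAt (deriv f) (V u * f u) u)
    (hV : ∀ u ∈ Ici a, 0 ≤ V u) (hff' : ∀ u ∈ Ici a, f u * deriv f u ≤ 0) :
    AntitoneOn (fun u => deriv f u ^ 2) (Ici a) := by
  refine antitoneOn_of_hasDerivAt_nonpos (convex_Ici a)
    (g' := fun u => 2 * (V u * (f u * deriv f u)))
    (fun u hu => ?_) (fun u hu => ?_)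
  · refine ((hf' u hu).pow 2).congr_deriv ?_
    norm_num
    ring
  · linarith [mul_nonpos_of_nonneg_of_nonpos (hV u hu) (hff' u hu)]

-- `(f f')' ≥ f'²`, and `f'²` is at least `f' x ^ 2` on `[x - 1, x]`.
lemma deriv_sq_le_abs_mul_abs_sub_one (hf : ∀ u ∈ Ici a, HasDerivAt f (deriv f u) u)
    (hf' : ∀ u ∈ Ici a, HasDerivAt (deriv f) (V u * f u) u)
    (hV : ∀ u ∈ Ici a, 0 ≤ V u) (hff' : ∀ u ∈ Ici a, f u * deriv f u ≤ 0) (hx : a + 1 ≤ x) :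
    deriv f x ^ 2 ≤ |f (x - 1)| * |deriv f (x - 1)| := by
  have hmem : ∀ u ∈ Icc (x - 1) x, u ∈ Ici a := fun u hu => mem_Ici.2 (by linarith [hu.1])
  have hanti : AntitoneOn (fun u => deriv f x ^ 2 * u - f u * deriv f u) (Icc (x - 1) x) := by
    refine antitoneOn_of_hasDerivAt_nonpos (convex_Icc _ _)
      (g' := fun u => deriv f x ^ 2 - (deriv f u ^ 2 + V u * f u ^ 2))
      (fun u hu => ?_) (fun u hu => ?_)
    · refine (((hasDerivAt_id u).const_mul (deriv f x ^ 2)).sub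
        ((hf u (hmem u hu)).mul (hf' u (hmem u hu)))).congr_deriv ?_
      ring
    · have hmono : deriv f x ^ 2 ≤ deriv f u ^ 2 :=
        antitoneOn_deriv_sq hf' hV hff' (hmem u hu) (by linarith [hmem u hu, hu.2] : a ≤ x) hu.2
      linarith [mul_nonneg (hV u (hmem u hu)) (sq_nonneg (f u))]
  have hle := hanti (left_mem_Icc.2 (by linarith)) (right_mem_Icc.2 (by linarith)) (by linarith)
  simp only at hle
  have hneg := neg_abs_le (f (x - 1) * deriv f (x - 1))
  rw [abs_mul] at hneg
  linarith [hff' x (mem_Ici.2 (by linarith))]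

end SecondOrder

section EdgeEquation

/-- The potential of the equation `ψ'' = V ψ` satisfied by `ψ_n`, in terms of `ν = n ^ (1 / 3)`. -/
noncomputable def edgePotential (ν x : ℝ) : ℝ := x + x ^ 2 / (4 * ν ^ 2) - 1 / (2 * ν)

/-- The derivative of `edgePotential ν`; it vanishes at the centre `-2 ν ^ 2` of the oscillator. -/
noncomputable def edgeSlope (ν x : ℝ) : ℝ := 1 + x / (2 * ν ^ 2)

/-- The features of `ψ_n` (`n` even, `ν = n ^ (1 / 3)`) that determine its size: it solves the
oscillator equation at the edge scale, it is small and stationary at the centre `-2 ν ^ 2` of the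
spectrum, and it is recessive at `+∞`. -/
structure EdgeSolution (ν : ℝ) (f : ℝ → ℝ) : Prop where
  one_le : 1 ≤ ν
  differentiable : Differentiable ℝ f
  hasDerivAt_deriv : ∀ x, HasDerivAt (deriv f) (edgePotential ν x * f x) x
  sq_center_le : f (-(2 * ν ^ 2)) ^ 2 ≤ 1 / ν
  deriv_center : deriv f (-(2 * ν ^ 2)) = 0
  tendsto_mul_deriv : Tendsto (fun x => f x * deriv f x) atTop (nhds 0)
  tendsto_deriv_sq_sub :
    Tendsto (fun x => deriv f x ^ 2 - edgePotential ν x * f x ^ 2) atTop (nhds 0)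

variable {ν x : ℝ}

lemma hasDerivAt_edgePotential (ν x : ℝ) : HasDerivAt (edgePotential ν) (edgeSlope ν x) x := by
  refine (((hasDerivAt_id x).add (((hasDerivAt_id x).pow 2).div_const (4 * ν ^ 2))).sub_const
    (1 / (2 * ν))).congr_deriv ?_
  simp only [edgeSlope, id]
  norm_num
  ring

lemma hasDerivAt_edgeSlope (ν x : ℝ) : HasDerivAt (edgeSlope ν) (1 / (2 * ν ^ 2)) x :=
  ((hasDerivAt_id x).div_const (2 * ν ^ 2)).const_add 1

lemma continuous_edgeSlope (ν : ℝ) : Continuous (edgeSlope ν) := by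
  unfold edgeSlope
  fun_prop

lemma edgeSlope_nonneg (hν : ν ≠ 0) (hx : -(2 * ν ^ 2) ≤ x) : 0 ≤ edgeSlope ν x := by
  have : -1 ≤ x / (2 * ν ^ 2) := by
    rw [le_div_iff₀ (by positivity)]
    linarith
  unfold edgeSlope
  linarith

lemma edgeSlope_le_one (hx : x ≤ 0) : edgeSlope ν x ≤ 1 :=
  add_le_of_nonpos_right (div_nonpos_of_nonpos_of_nonneg hx (by positivity))

lemma abs_edgeSlope_le_one (hν : ν ≠ 0) (hx : -(2 * ν ^ 2) ≤ x) (hx0 : x ≤ 0) :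
    |edgeSlope ν x| ≤ 1 := by
  rw [abs_of_nonneg (edgeSlope_nonneg hν hx)]
  exact edgeSlope_le_one hx0

lemma abs_edgeSlope_le (hν : 1 ≤ ν) : |edgeSlope ν x| ≤ 1 + |x| := by
  have hdiv : |x / (2 * ν ^ 2)| ≤ |x| := by
    rw [abs_div, abs_of_pos (by positivity : 0 < 2 * ν ^ 2)]
    exact div_le_self (abs_nonneg x) (by nlinarith)
  simpa [edgeSlope] using (abs_add_le 1 (x / (2 * ν ^ 2))).trans (by simpa using hdiv)

lemma one_div_two_mul_mem_Ioc (hν : 1 ≤ ν) : 1 / (2 * ν) ∈ Ioc (0 : ℝ) (1 / 2) :=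
  ⟨by positivity, one_div_le_one_div_of_le (by norm_num) (by linarith)⟩

lemma half_neg_le_neg_edgePotential (hν : 1 ≤ ν) (hx : -(2 * ν ^ 2) ≤ x) (hx0 : x ≤ 0) :
    -x / 2 ≤ -edgePotential ν x := by
  have hquad : x ^ 2 / (4 * ν ^ 2) ≤ -x / 2 := by
    rw [div_le_iff₀ (by positivity)]
    nlinarith
  unfold edgePotential
  linarith [(one_div_two_mul_mem_Ioc hν).1]

lemma neg_edgePotential_le (hν : 1 ≤ ν) : -edgePotential ν x ≤ -x + 1 / 2 := by
  have : 0 ≤ x ^ 2 / (4 * ν ^ 2) := by positivity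
  unfold edgePotential
  linarith [(one_div_two_mul_mem_Ioc hν).2]

lemma quarter_le_edgePotential (hν : 1 ≤ ν) (hx : 1 ≤ x) : 1 / 4 ≤ edgePotential ν x := by
  linarith [neg_edgePotential_le hν (x := x)]

lemma abs_edgePotential_le (hν : 1 ≤ ν) : |edgePotential ν x| ≤ (1 + |x|) ^ 2 := by
  have hquad : x ^ 2 / (4 * ν ^ 2) ≤ |x| ^ 2 := by
    rw [sq_abs]
    exact div_le_self (sq_nonneg x) (by nlinarith)
  have : 0 ≤ x ^ 2 / (4 * ν ^ 2) := by positivity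
  have hhalf := one_div_two_mul_mem_Ioc hν
  unfold edgePotential
  rw [abs_le]
  constructor <;> nlinarith [neg_abs_le x, le_abs_self x, abs_nonneg x, hhalf.1, hhalf.2]

end EdgeEquation

section EdgeWeight

variable {x y s u : ℝ}

/-- The weight `(1 + |x|) ^ (1 / 4)`, the inverse of the envelope of `ψ_n` to the left of the
edge. -/
noncomputable def edgeWeight (x : ℝ) : ℝ := (1 + |x|) ^ ((1 : ℝ) / 4)

lemma edgeWeight_pow_four (x : ℝ) : edgeWeight x ^ 4 = 1 + |x| := by
  rw [edgeWeight, ← Real.rpow_natCast, ← Real.rpow_mul (by positivity)]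
  norm_num

lemma one_le_edgeWeight (x : ℝ) : 1 ≤ edgeWeight x :=
  Real.one_le_rpow (by linarith [abs_nonneg x]) (by norm_num)

lemma edgeWeight_pos (x : ℝ) : 0 < edgeWeight x := one_pos.trans_le (one_le_edgeWeight x)

lemma edgeWeight_neg (x : ℝ) : edgeWeight (-x) = edgeWeight x := by simp only [edgeWeight, abs_neg]

lemma edgeWeight_abs (x : ℝ) : edgeWeight |x| = edgeWeight x := by simp only [edgeWeight, abs_abs]

lemma edgeWeight_le_edgeWeight (h : |x| ≤ |y|) : edgeWeight x ≤ edgeWeight y :=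
  Real.rpow_le_rpow (by positivity) (by linarith) (by norm_num)

lemma edgeWeight_le_mul (h : |x| ≤ |u| + |s|) : edgeWeight x ≤ edgeWeight u * edgeWeight s := by
  have := edgeWeight_pos u
  have := edgeWeight_pos s
  refine le_of_pow_le_pow_left₀ (n := 4) (by norm_num) (by positivity) ?_
  rw [mul_pow, edgeWeight_pow_four, edgeWeight_pow_four, edgeWeight_pow_four]
  nlinarith [abs_nonneg u, abs_nonneg s]

lemma edgeWeight_le_two (h : |x| ≤ 2) : edgeWeight x ≤ 2 := by
  refine le_of_pow_le_pow_left₀ (n := 4) (by norm_num) (by norm_num) ?_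
  rw [edgeWeight_pow_four]
  linarith

lemma edgeWeight_pow_three_le (x : ℝ) : edgeWeight x ^ 3 ≤ 1 + |x| :=
  edgeWeight_pow_four x ▸ pow_le_pow_right₀ (one_le_edgeWeight x) (by norm_num)

lemma one_add_sq_le_edgeWeight_pow_eight (x : ℝ) : 1 + x ^ 2 ≤ edgeWeight x ^ 8 := by
  rw [show edgeWeight x ^ 8 = (edgeWeight x ^ 4) ^ 2 by ring, edgeWeight_pow_four, ← sq_abs]
  nlinarith [abs_nonneg x]

lemma hasDerivAt_edgeWeight_of_pos (hx : 0 < x) :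
    HasDerivAt edgeWeight (1 / (4 * edgeWeight x ^ 3)) x := by
  have hloc : edgeWeight =ᶠ[nhds x] fun u => (1 + u) ^ ((1 : ℝ) / 4) := by
    filter_upwards [lt_mem_nhds hx] with u hu
    rw [edgeWeight, abs_of_pos hu]
  refine HasDerivAt.congr_of_eventuallyEq ?_ hloc
  refine (((hasDerivAt_id x).const_add 1).rpow_const
    (p := 1 / 4) (Or.inl (by simp only [id]; linarith))).congr_deriv ?_
  have hcube : edgeWeight x ^ 3 = (1 + x) ^ ((3 : ℝ) / 4) := by
    rw [edgeWeight, abs_of_pos hx, ← Real.rpow_natCast, ← Real.rpow_mul (by positivity)]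
    norm_num
  rw [hcube, id, show (1 : ℝ) / 4 - 1 = -(3 / 4) by norm_num, Real.rpow_neg (by positivity)]
  field_simp

lemma hasDerivAt_edgeWeight_of_neg (hx : x < 0) :
    HasDerivAt edgeWeight (-(1 / (4 * edgeWeight x ^ 3))) x := by
  have h := (hasDerivAt_edgeWeight_of_pos (neg_pos.2 hx)).comp x (hasDerivAt_neg x)
  rw [edgeWeight_neg, show edgeWeight ∘ Neg.neg = edgeWeight from funext edgeWeight_neg] at h
  exact h.congr_deriv (by ring)

lemma exp_neg_div_four_le (hx : -2 ≤ x) :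
    Real.exp (-x / 4) ≤ 6144 * Real.exp (5 / 4) / edgeWeight x ^ 16 := by
  have := edgeWeight_pos x
  have hpow : edgeWeight x ^ 16 ≤ (x + 5) ^ 4 := by
    rw [show edgeWeight x ^ 16 = (edgeWeight x ^ 4) ^ 4 by ring, edgeWeight_pow_four]
    exact pow_le_pow_left₀ (by positivity) (by rcases abs_cases x with h | h <;> linarith) 4
  have hfact : (x + 5) ^ 4 ≤ 6144 * Real.exp ((x + 5) / 4) := by
    have h := Real.pow_div_factorial_le_exp ((x + 5) / 4) (by linarith) 4
    rw [div_le_iff₀ (by positivity)] at h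
    norm_num [Nat.factorial] at h
    linarith
  rw [le_div_iff₀ (by positivity)]
  calc Real.exp (-x / 4) * edgeWeight x ^ 16
      ≤ Real.exp (-x / 4) * (6144 * Real.exp ((x + 5) / 4)) := by
        gcongr
        exact hpow.trans hfact
    _ = 6144 * Real.exp (-x / 4 + (x + 5) / 4) := by rw [Real.exp_add]; ring
    _ = 6144 * Real.exp (5 / 4) := by ring_nf

end EdgeWeight

namespace EdgeSolution

variable {ν x : ℝ} {f : ℝ → ℝ}

section

variable (S : EdgeSolution ν f)
include S

lemma hasDerivAt (x : ℝ) : HasDerivAt f (deriv f x) x := (S.differentiable x).hasDerivAt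

lemma pos : 0 < ν := one_pos.trans_le S.one_le

lemma continuous : Continuous f := S.differentiable.continuous

lemma continuous_deriv : Continuous (deriv f) :=
  continuous_iff_continuousAt.2 fun x => (S.hasDerivAt_deriv x).continuousAt

lemma wkbEnergy_center_le : wkbEnergy (fun u => -edgePotential ν u) f (-(2 * ν ^ 2)) ≤ 2 := by
  have := S.pos
  have hsqrt : √(-edgePotential ν (-(2 * ν ^ 2))) ≤ 2 * ν := by
    refine Real.sqrt_le_iff.2 ⟨by positivity, ?_⟩
    nlinarith [neg_edgePotential_le S.one_le (x := -(2 * ν ^ 2)), S.one_le]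
  rw [wkbEnergy, S.deriv_center]
  calc √(-edgePotential ν (-(2 * ν ^ 2))) * f (-(2 * ν ^ 2)) ^ 2 + 0 ^ 2 / _
      ≤ 2 * ν * (1 / ν) + 0 := by
        gcongr
        · exact S.sq_center_le
        · simp
    _ = 2 := by field_simp; ring

lemma wkbEnergy_le (hx : -(2 * ν ^ 2) ≤ x) (hx2 : x ≤ -2) :
    wkbEnergy (fun u => -edgePotential ν u) f x ≤ 10 := by
  have := S.pos
  have hq1 : ∀ u ∈ Icc (-(2 * ν ^ 2)) x, 1 ≤ -edgePotential ν u := fun u hu => by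
    linarith [half_neg_le_neg_edgePotential S.one_le hu.1 (by linarith [hu.2]), hu.2]
  have hr1 : ∀ u ∈ Icc (-(2 * ν ^ 2)) x, 1 ≤ √(-edgePotential ν u) := fun u hu =>
    Real.one_le_sqrt.2 (hq1 u hu)
  have hr0 : ∀ u ∈ Icc (-(2 * ν ^ 2)) x, 0 < √(-edgePotential ν u) := fun u hu =>
    one_pos.trans_le (hr1 u hu)
  have hq' (u : ℝ) : HasDerivAt (fun u => -edgePotential ν u) (-edgeSlope ν u) u :=
    (hasDerivAt_edgePotential ν u).neg
  have henergy := wkbEnergy_le_five_mul (f := f) (q := fun u => -edgePotential ν u)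
    (k := fun u => -edgeSlope ν u / √(-edgePotential ν u) ^ 3)
    (k' := fun u => -(1 / (2 * ν ^ 2) / √(-edgePotential ν u) ^ 3
      + 3 / 2 * edgeSlope ν u ^ 2 / √(-edgePotential ν u) ^ 5))
    (fun u _ => S.hasDerivAt u) (fun u _ => by simpa using S.hasDerivAt_deriv u)
    (fun u hu => by linarith [hq1 u hu])
    (fun u hu => (hq' u).congr_deriv (by have := hr0 u hu; field_simp))
    (fun u hu => ?_) (fun u _ => neg_nonpos.2 (by positivity)) (fun u hu => ?_) hx
  · linarith [S.wkbEnergy_center_le]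
  · have := hr0 u hu
    refine ((hasDerivAt_edgeSlope ν u).neg.div (((hq' u).sqrt (by linarith [hq1 u hu])).pow 3)
      (by simp only [Pi.pow_apply]; positivity)).congr_deriv ?_
    simp only [Pi.pow_apply, Pi.neg_apply]
    field_simp
    ring
  · rw [abs_div, abs_neg, abs_of_pos (pow_pos (hr0 u hu) 3)]
    exact div_le_one_of_le₀ ((abs_edgeSlope_le_one S.pos.ne' hu.1 (by linarith [hu.2])).trans
      (one_le_pow₀ (hr1 u hu))) (pow_nonneg (hr0 u hu).le 3)

lemma edgeWeight_pow_four_div_four_le (hx : -(2 * ν ^ 2) ≤ x) (hx2 : x ≤ -2) :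
    edgeWeight x ^ 4 / 4 ≤ -edgePotential ν x := by
  rw [edgeWeight_pow_four, abs_of_nonpos (by linarith)]
  linarith [half_neg_le_neg_edgePotential S.one_le hx (by linarith)]

lemma neg_edgePotential_le_edgeWeight_pow_four (hx2 : x ≤ -2) :
    -edgePotential ν x ≤ edgeWeight x ^ 4 := by
  rw [edgeWeight_pow_four, abs_of_nonpos (by linarith)]
  linarith [neg_edgePotential_le S.one_le (x := x)]

lemma abs_le_of_le_neg_two (hx : -(2 * ν ^ 2) ≤ x) (hx2 : x ≤ -2) :
    |f x| ≤ 5 / edgeWeight x := by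
  have hw := edgeWeight_pos x
  have hr : edgeWeight x ^ 2 / 2 ≤ √(-edgePotential ν x) :=
    Real.le_sqrt_of_sq_le (by nlinarith [S.edgeWeight_pow_four_div_four_le hx hx2])
  have hE := S.wkbEnergy_le hx hx2
  rw [wkbEnergy] at hE
  have : 0 ≤ deriv f x ^ 2 / √(-edgePotential ν x) := by positivity
  refine abs_le_of_sq_le_sq ?_ (by positivity)
  rw [div_pow, le_div_iff₀ (by positivity)]
  nlinarith [mul_le_mul_of_nonneg_right hr (sq_nonneg (f x))]

lemma abs_deriv_le_of_le_neg_two (hx : -(2 * ν ^ 2) ≤ x) (hx2 : x ≤ -2) :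
    |deriv f x| ≤ 5 * edgeWeight x := by
  have hw := edgeWeight_pos x
  have hr : √(-edgePotential ν x) ≤ edgeWeight x ^ 2 := Real.sqrt_le_iff.2
    ⟨by positivity, by nlinarith [S.neg_edgePotential_le_edgeWeight_pow_four hx2]⟩
  have hr0 : 0 < √(-edgePotential ν x) := Real.sqrt_pos.2
    (by linarith [half_neg_le_neg_edgePotential S.one_le hx (by linarith)])
  have hE := S.wkbEnergy_le hx hx2
  rw [wkbEnergy] at hE
  have : 0 ≤ √(-edgePotential ν x) * f x ^ 2 := by positivity
  have hf' : deriv f x ^ 2 ≤ 10 * √(-edgePotential ν x) := by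
    rw [← div_le_iff₀ hr0]
    linarith
  refine abs_le_of_sq_le_sq ?_ (by positivity)
  nlinarith

lemma mul_deriv_nonpos (hx : 1 ≤ x) : f x * deriv f x ≤ 0 :=
  mul_deriv_nonpos_of_tendsto (fun u _ => S.hasDerivAt u) (fun u _ => S.hasDerivAt_deriv u)
    (fun u hu => by linarith [quarter_le_edgePotential S.one_le hu]) S.tendsto_mul_deriv hx

lemma half_mul_sq_le_deriv_sq (hx : 1 ≤ x) : (1 / 2 * f x) ^ 2 ≤ deriv f x ^ 2 := by
  have hle := mul_sq_le_deriv_sq_of_tendsto (fun u _ => S.hasDerivAt u)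
    (fun u _ => S.hasDerivAt_deriv u) (fun u _ => hasDerivAt_edgePotential ν u)
    (fun u hu => edgeSlope_nonneg S.pos.ne' (by nlinarith [mem_Ici.1 hu]))
    S.tendsto_deriv_sq_sub hx
  nlinarith [mul_le_mul_of_nonneg_right (quarter_le_edgePotential S.one_le hx) (sq_nonneg (f x))]

lemma abs_le_mul_exp (hx : 1 ≤ x) : |f x| ≤ |f 1| * Real.exp ((1 - x) / 2) := by
  refine abs_le_of_sq_le_sq ?_ (by positivity)
  rw [mul_pow, sq_abs, ← Real.exp_nat_mul,
    show ((2 : ℕ) : ℝ) * ((1 - x) / 2) = 2 * (1 / 2) * (1 - x) by push_cast; ring]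
  exact sq_le_mul_exp_of_logDeriv_le (by norm_num) (fun u _ => S.hasDerivAt u)
    (fun u => S.mul_deriv_nonpos) (fun u => S.half_mul_sq_le_deriv_sq) hx

lemma abs_deriv_sq_le (hx : 2 ≤ x) :
    deriv f x ^ 2 ≤ |f 1| * Real.exp ((2 - x) / 2) * |deriv f 1| := by
  have hV : ∀ u ∈ Ici (1 : ℝ), 0 ≤ edgePotential ν u := fun u hu => by
    linarith [quarter_le_edgePotential S.one_le hu]
  have hanti : |deriv f (x - 1)| ≤ |deriv f 1| := sq_le_sq.1
    (antitoneOn_deriv_sq (fun u _ => S.hasDerivAt_deriv u) hV (fun u => S.mul_deriv_nonpos)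
      self_mem_Ici (by linarith : (1 : ℝ) ≤ x - 1) (by linarith))
  have hexp := S.abs_le_mul_exp (x := x - 1) (by linarith)
  rw [show 1 - (x - 1) = 2 - x by ring] at hexp
  calc deriv f x ^ 2 ≤ |f (x - 1)| * |deriv f (x - 1)| :=
        deriv_sq_le_abs_mul_abs_sub_one (fun u _ => S.hasDerivAt u)
          (fun u _ => S.hasDerivAt_deriv u) hV (fun u => S.mul_deriv_nonpos) (by linarith)
    _ ≤ _ := by gcongr

lemma sq_add_deriv_sq_le_of_mem_Icc (hx : x ∈ Icc (-2 : ℝ) 4) :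
    f x ^ 2 + deriv f x ^ 2 ≤ (20 * Real.exp 78) ^ 2 := by
  have hcenter : -(2 * ν ^ 2) ≤ -2 := by nlinarith [S.one_le]
  have hw := one_le_edgeWeight (-2)
  have hw2 : edgeWeight (-2) ≤ 2 := edgeWeight_le_two (by norm_num)
  have hf : |f (-2)| ≤ 5 := (S.abs_le_of_le_neg_two hcenter le_rfl).trans
    (div_le_self (by norm_num) hw)
  have hf' : |deriv f (-2)| ≤ 10 := (S.abs_deriv_le_of_le_neg_two hcenter le_rfl).trans
    (by linarith)
  have hV : ∀ u ∈ Icc (-2) x, |1 + edgePotential ν u| ≤ 26 := fun u hu => by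
    have hu4 : |u| ≤ 4 := abs_le.2 ⟨by linarith [hu.1], by linarith [hu.2, hx.2]⟩
    have habs := abs_edgePotential_le S.one_le (x := u)
    have hadd := abs_add_le 1 (edgePotential ν u)
    rw [abs_one] at hadd
    nlinarith [abs_nonneg u]
  calc f x ^ 2 + deriv f x ^ 2
      ≤ (f (-2) ^ 2 + deriv f (-2) ^ 2) * Real.exp (26 * (x - -2)) :=
        sq_add_deriv_sq_le (fun u _ => S.hasDerivAt u) (fun u _ => S.hasDerivAt_deriv u) hV hx.1
    _ ≤ (5 ^ 2 + 10 ^ 2) * Real.exp (2 * 78) := by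
        refine mul_le_mul ?_ (Real.exp_le_exp.2 (by linarith [hx.2])) (Real.exp_pos _).le
          (by norm_num)
        rw [← sq_abs (f (-2)), ← sq_abs (deriv f (-2))]
        gcongr
    _ ≤ (20 * Real.exp 78) ^ 2 := by
        rw [two_mul, Real.exp_add]
        nlinarith [Real.exp_pos 78]

end

lemma exists_abs_le_exp : ∃ C > 0, ∀ ⦃ν : ℝ⦄ ⦃f : ℝ → ℝ⦄, EdgeSolution ν f → ∀ ⦃x⦄, -2 ≤ x →
    |f x| ≤ C * Real.exp (-x / 4) ∧ |deriv f x| ≤ C * Real.exp (-x / 4) := by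
  obtain ⟨B, hB, hmid⟩ : ∃ B > 0, ∀ ⦃ν f⦄, EdgeSolution ν f → ∀ ⦃x⦄, x ∈ Icc (-2 : ℝ) 4 →
      |f x| ≤ B ∧ |deriv f x| ≤ B := by
    refine ⟨20 * Real.exp 78, by positivity, fun ν f S x hx => ?_⟩
    have hsum := S.sq_add_deriv_sq_le_of_mem_Icc hx
    exact ⟨abs_le_of_sq_le_sq (by linarith [sq_nonneg (deriv f x)]) (by positivity),
      abs_le_of_sq_le_sq (by linarith [sq_nonneg (f x)]) (by positivity)⟩
  refine ⟨B * Real.exp 1, by positivity, fun ν f S x hx => ?_⟩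
  rw [mul_assoc, ← Real.exp_add]
  rcases le_total x 4 with h4 | h4
  · have hle : B ≤ B * Real.exp (1 + -x / 4) :=
      le_mul_of_one_le_right hB.le (Real.one_le_exp (by linarith))
    exact ⟨(hmid S ⟨hx, h4⟩).1.trans hle, (hmid S ⟨hx, h4⟩).2.trans hle⟩
  · obtain ⟨hf1, hf1'⟩ := hmid S (x := 1) ⟨by norm_num, by norm_num⟩
    refine ⟨?_, abs_le_of_sq_le_sq ?_ (by positivity)⟩
    · refine (S.abs_le_mul_exp (by linarith)).trans ?_
      gcongr
      linarith
    · calc deriv f x ^ 2 ≤ |f 1| * Real.exp ((2 - x) / 2) * |deriv f 1| :=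
            S.abs_deriv_sq_le (by linarith)
        _ ≤ B * Real.exp ((2 - x) / 2) * B := by gcongr
        _ ≤ (B * Real.exp (1 + -x / 4)) ^ 2 := by
            rw [mul_right_comm, ← sq, mul_pow, ← Real.exp_nat_mul]
            gcongr
            push_cast
            linarith

lemma exists_abs_le_div_edgeWeight_pow : ∃ C > 0, ∀ ⦃ν : ℝ⦄ ⦃f : ℝ → ℝ⦄, EdgeSolution ν f →
    ∀ ⦃x⦄, -2 ≤ x → |f x| ≤ C / edgeWeight x ^ 16 ∧ |deriv f x| ≤ C / edgeWeight x ^ 16 := by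
  obtain ⟨C, hC, h⟩ := exists_abs_le_exp
  refine ⟨C * (6144 * Real.exp (5 / 4)), by positivity, fun ν f S x hx => ?_⟩
  have hle : C * Real.exp (-x / 4) ≤ C * (6144 * Real.exp (5 / 4)) / edgeWeight x ^ 16 := by
    rw [mul_div_assoc]
    exact mul_le_mul_of_nonneg_left (exp_neg_div_four_le hx) hC.le
  exact ⟨(h S hx).1.trans hle, (h S hx).2.trans hle⟩

lemma exists_abs_le : ∃ C > 0, ∀ ⦃ν : ℝ⦄ ⦃f : ℝ → ℝ⦄, EdgeSolution ν f →
    ∀ ⦃x⦄, -(2 * ν ^ 2) ≤ x → |f x| ≤ C / edgeWeight x := by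
  obtain ⟨C, hC, h⟩ := exists_abs_le_div_edgeWeight_pow
  refine ⟨C + 5, by positivity, fun ν f S x hx => ?_⟩
  have := edgeWeight_pos x
  rcases le_total x (-2) with h2 | h2
  · refine (S.abs_le_of_le_neg_two hx h2).trans ?_
    gcongr
    linarith
  · refine (h S h2).1.trans ?_
    gcongr
    · linarith
    · exact le_self_pow₀ (one_le_edgeWeight x) (by norm_num)

lemma exists_abs_deriv_le : ∃ C > 0, ∀ ⦃ν : ℝ⦄ ⦃f : ℝ → ℝ⦄, EdgeSolution ν f →
    ∀ ⦃x⦄, -(2 * ν ^ 2) ≤ x → |deriv f x| ≤ C * edgeWeight x := by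
  obtain ⟨C, hC, h⟩ := exists_abs_le_div_edgeWeight_pow
  refine ⟨C + 5, by positivity, fun ν f S x hx => ?_⟩
  have hw := one_le_edgeWeight x
  rcases le_total x (-2) with h2 | h2
  · refine (S.abs_deriv_le_of_le_neg_two hx h2).trans ?_
    gcongr
    linarith
  · calc |deriv f x| ≤ C / edgeWeight x ^ 16 := (h S h2).2
      _ ≤ C := div_le_self hC.le (one_le_pow₀ hw)
      _ ≤ (C + 5) * edgeWeight x := by nlinarith

lemma exists_abs_edgePotential_mul_le : ∃ C > 0, ∀ ⦃ν : ℝ⦄ ⦃f : ℝ → ℝ⦄, EdgeSolution ν f →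
    ∀ ⦃x⦄, -(2 * ν ^ 2) ≤ x → |edgePotential ν x * f x| ≤ C * edgeWeight x ^ 3 := by
  obtain ⟨C, hC, h⟩ := exists_abs_le_div_edgeWeight_pow
  refine ⟨C + 5, by positivity, fun ν f S x hx => ?_⟩
  have hw := one_le_edgeWeight x
  have := edgeWeight_pos x
  rw [abs_mul]
  rcases le_total x (-2) with h2 | h2
  · have hV : |edgePotential ν x| ≤ edgeWeight x ^ 4 := abs_le'.2
      ⟨by linarith [half_neg_le_neg_edgePotential S.one_le hx (by linarith),
        pow_pos (edgeWeight_pos x) 4], S.neg_edgePotential_le_edgeWeight_pow_four h2⟩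
    calc |edgePotential ν x| * |f x| ≤ edgeWeight x ^ 4 * (5 / edgeWeight x) :=
          mul_le_mul hV (S.abs_le_of_le_neg_two hx h2) (abs_nonneg _) (by positivity)
      _ = 5 * edgeWeight x ^ 3 := by field_simp
      _ ≤ (C + 5) * edgeWeight x ^ 3 := by gcongr; linarith
  · have hV : |edgePotential ν x| ≤ edgeWeight x ^ 8 := by
      rw [show edgeWeight x ^ 8 = (edgeWeight x ^ 4) ^ 2 by ring, edgeWeight_pow_four]
      exact abs_edgePotential_le S.one_le
    calc |edgePotential ν x| * |f x| ≤ edgeWeight x ^ 8 * (C / edgeWeight x ^ 16) :=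
          mul_le_mul hV (h S h2).1 (abs_nonneg _) (by positivity)
      _ = C / edgeWeight x ^ 8 := by field_simp
      _ ≤ C := div_le_self hC.le (one_le_pow₀ hw)
      _ ≤ (C + 5) * edgeWeight x ^ 3 := by nlinarith [one_le_pow₀ hw (n := 3)]

lemma exists_abs_deriv_div_le : ∃ C > 0, ∀ ⦃ν : ℝ⦄ ⦃f : ℝ → ℝ⦄, EdgeSolution ν f →
    ∀ ⦃x⦄, -(2 * ν ^ 2) ≤ x → |deriv f x / ν| ≤ C / edgeWeight x := by
  obtain ⟨C, hC, h⟩ := exists_abs_le_div_edgeWeight_pow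
  refine ⟨C + 10, by positivity, fun ν f S x hx => ?_⟩
  have hν := S.pos
  have hw := edgeWeight_pos x
  rw [abs_div, abs_of_pos hν]
  rcases le_total x (-2) with h2 | h2
  · have hsq : edgeWeight x ^ 2 ≤ 2 * ν := by
      refine le_of_pow_le_pow_left₀ (n := 2) (by norm_num) (by positivity) ?_
      rw [← pow_mul, edgeWeight_pow_four, abs_of_nonpos (by linarith)]
      nlinarith [S.one_le]
    rw [div_le_div_iff₀ hν hw]
    calc |deriv f x| * edgeWeight x ≤ 5 * edgeWeight x * edgeWeight x := by
          gcongr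
          exact S.abs_deriv_le_of_le_neg_two hx h2
      _ ≤ (C + 10) * ν := by nlinarith
  · calc |deriv f x| / ν ≤ |deriv f x| := div_le_self (abs_nonneg _) S.one_le
      _ ≤ C / edgeWeight x ^ 16 := (h S h2).2
      _ ≤ (C + 10) / edgeWeight x := by
          gcongr
          · linarith
          · exact le_self_pow₀ (one_le_edgeWeight x) (by norm_num)

lemma exists_abs_edgeSlope_mul_le : ∃ C > 0, ∀ ⦃ν : ℝ⦄ ⦃f : ℝ → ℝ⦄, EdgeSolution ν f →
    ∀ ⦃x⦄, -(2 * ν ^ 2) ≤ x → |edgeSlope ν x * f x| ≤ C / edgeWeight x := by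
  obtain ⟨C, hC, h⟩ := exists_abs_le_div_edgeWeight_pow
  refine ⟨C + 5, by positivity, fun ν f S x hx => ?_⟩
  have := edgeWeight_pos x
  rw [abs_mul]
  rcases le_total x (-2) with h2 | h2
  · calc |edgeSlope ν x| * |f x| ≤ 1 * (5 / edgeWeight x) :=
          mul_le_mul (abs_edgeSlope_le_one S.pos.ne' hx (by linarith))
            (S.abs_le_of_le_neg_two hx h2) (abs_nonneg _) zero_le_one
      _ ≤ (C + 5) / edgeWeight x := by
          rw [one_mul]
          gcongr
          linarith
  · calc |edgeSlope ν x| * |f x| ≤ edgeWeight x ^ 4 * (C / edgeWeight x ^ 16) :=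
          mul_le_mul (edgeWeight_pow_four x ▸ abs_edgeSlope_le S.one_le) (h S h2).1
            (abs_nonneg _) (by positivity)
      _ = C / edgeWeight x ^ 12 := by field_simp
      _ ≤ (C + 5) / edgeWeight x := by
          gcongr
          · linarith
          · exact le_self_pow₀ (one_le_edgeWeight x) (by norm_num)

end EdgeSolution

namespace EdgeSolution

variable {ν a b x : ℝ} {f : ℝ → ℝ}

section

variable (S : EdgeSolution ν f)
include S

lemma abs_deriv_div_edgePotential_le (hx : -(2 * ν ^ 2) ≤ x) (hx2 : x ≤ -2) :
    |deriv f x / edgePotential ν x| ≤ 20 / edgeWeight x ^ 3 := by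
  have hw := edgeWeight_pos x
  have hV := S.edgeWeight_pow_four_div_four_le hx hx2
  rw [abs_div, abs_of_neg (by linarith [pow_pos hw 4] : edgePotential ν x < 0)]
  calc |deriv f x| / -edgePotential ν x ≤ 5 * edgeWeight x / (edgeWeight x ^ 4 / 4) := by
        gcongr
        exact S.abs_deriv_le_of_le_neg_two hx hx2
    _ = 20 / edgeWeight x ^ 3 := by field_simp; norm_num

lemma abs_deriv_mul_edgeSlope_div_sq_le (hx : -(2 * ν ^ 2) ≤ x) (hx2 : x ≤ -2) :
    |deriv f x * edgeSlope ν x / edgePotential ν x ^ 2| ≤ 80 / edgeWeight x ^ 7 := by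
  have := edgeWeight_pos x
  have hV2 : (edgeWeight x ^ 4 / 4) ^ 2 ≤ edgePotential ν x ^ 2 := by
    rw [← neg_sq (edgePotential ν x)]
    exact pow_le_pow_left₀ (by positivity) (S.edgeWeight_pow_four_div_four_le hx hx2) 2
  rw [abs_div, abs_mul, abs_of_nonneg (sq_nonneg (edgePotential ν x))]
  calc |deriv f x| * |edgeSlope ν x| / edgePotential ν x ^ 2
      ≤ 5 * edgeWeight x * 1 / (edgeWeight x ^ 4 / 4) ^ 2 := by
        gcongr
        · exact S.abs_deriv_le_of_le_neg_two hx hx2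
        · exact abs_edgeSlope_le_one S.pos.ne' hx (by linarith)
    _ = 80 / edgeWeight x ^ 7 := by field_simp; norm_num

-- Integration by parts, from `f = f'' / V`.
lemma abs_integral_le_of_le_neg_two (ha : -(2 * ν ^ 2) ≤ a) (hab : a ≤ b) (hb : b ≤ -2) :
    |∫ u in a..b, f u| ≤ 200 / edgeWeight b ^ 3 := by
  have hV : ∀ u ∈ Icc a b, edgeWeight u ^ 4 / 4 ≤ -edgePotential ν u := fun u hu =>
    S.edgeWeight_pow_four_div_four_le (ha.trans hu.1) (hu.2.trans hb)
  have hparts := norm_sub_le_of_norm_deriv_le (E := ℝ)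
    (h := fun u => (∫ v in a..u, f v) - deriv f u / edgePotential ν u)
    (h' := fun u => deriv f u * edgeSlope ν u / edgePotential ν u ^ 2)
    (R := fun u => 320 / 3 * (edgeWeight u ^ 3)⁻¹) (R' := fun u => 80 / edgeWeight u ^ 7) hab
    (fun u hu => ?_) (fun u hu => ?_) (fun u hu => ?_)
  · simp only [intervalIntegral.integral_same, zero_sub, Real.norm_eq_abs] at hparts
    have hPa := S.abs_deriv_div_edgePotential_le ha (hab.trans hb)
    have hPb := S.abs_deriv_div_edgePotential_le (ha.trans hab) hb
    have hwab : edgeWeight b ≤ edgeWeight a := edgeWeight_le_edgeWeight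
      (by rw [abs_of_nonpos (by linarith), abs_of_nonpos (by linarith)]; linarith)
    have hwb := edgeWeight_pos b
    have := edgeWeight_pos a
    have hinv : 20 / edgeWeight a ^ 3 ≤ 20 / edgeWeight b ^ 3 := by gcongr
    have : 0 < (edgeWeight a ^ 3)⁻¹ := by positivity
    have : 0 < (edgeWeight b ^ 3)⁻¹ := by positivity
    rw [abs_le] at hparts hPa hPb ⊢
    simp only [div_eq_mul_inv] at *
    constructor <;> linarith [hparts.1, hparts.2, hPa.1, hPa.2, hPb.1, hPb.2]
  · have hV0 : edgePotential ν u ≠ 0 := by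
      have := pow_pos (edgeWeight_pos u) 4
      exact (by linarith [hV u hu] : edgePotential ν u < 0).ne
    refine ((S.continuous.integral_hasStrictDerivAt a u).hasDerivAt.sub
      ((S.hasDerivAt_deriv u).div (hasDerivAt_edgePotential ν u) hV0)).congr_deriv ?_
    field_simp
    ring
  · have := edgeWeight_pos u
    refine ((((hasDerivAt_edgeWeight_of_neg (x := u) (by linarith [hu.2])).pow 3).inv
      (pow_pos this 3).ne').const_mul (320 / 3)).congr_deriv ?_
    simp only [Pi.pow_apply]
    field_simp
    ring
  · exact S.abs_deriv_mul_edgeSlope_div_sq_le (ha.trans hu.1) (hu.2.trans hb)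

-- Integration by parts, as `edgeSlope ν` varies by at most `1` on `[a, b]`.
lemma abs_integral_edgeSlope_mul_le {C : ℝ} (ha : -(2 * ν ^ 2) ≤ a) (hab : a ≤ b) (hb : b ≤ 0)
    (hIntegral : ∀ u ∈ Icc a b, |∫ v in a..u, f v| ≤ C) :
    |∫ u in a..b, edgeSlope ν u * f u| ≤ 2 * C := by
  have hν := S.pos
  have hC : 0 ≤ C := (abs_nonneg _).trans (hIntegral a (left_mem_Icc.2 hab))
  have hparts := norm_sub_le_of_norm_deriv_le (E := ℝ)
    (h := fun u => (∫ v in a..u, edgeSlope ν v * f v) - edgeSlope ν u * ∫ v in a..u, f v)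
    (h' := fun u => -(1 / (2 * ν ^ 2) * ∫ v in a..u, f v))
    (R := fun u => u * (C / (2 * ν ^ 2))) (R' := fun _ => C / (2 * ν ^ 2)) hab
    (fun u _ => ?_) (fun u _ => hasDerivAt_mul_const _) (fun u hu => ?_)
  · simp only [intervalIntegral.integral_same, mul_zero, sub_zero, Real.norm_eq_abs] at hparts
    have hend : |edgeSlope ν b * ∫ v in a..b, f v| ≤ C := by
      rw [abs_mul, ← one_mul C]
      exact mul_le_mul (abs_edgeSlope_le_one hν.ne' (ha.trans hab) hb)
        (hIntegral b (right_mem_Icc.2 hab)) (abs_nonneg _) zero_le_one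
    have hvar : b * (C / (2 * ν ^ 2)) - a * (C / (2 * ν ^ 2)) ≤ C := by
      rw [← sub_mul, mul_div_assoc', div_le_iff₀ (by positivity)]
      nlinarith
    rw [abs_le] at hparts hend ⊢
    constructor <;> linarith [hparts.1, hparts.2, hend.1, hend.2]
  · have hcont : Continuous fun v => edgeSlope ν v * f v :=
      (continuous_edgeSlope ν).mul S.continuous
    refine ((hcont.integral_hasStrictDerivAt a u).hasDerivAt.sub ((hasDerivAt_edgeSlope ν u).mul
      (S.continuous.integral_hasStrictDerivAt a u).hasDerivAt)).congr_deriv ?_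
    ring
  · rw [norm_neg, norm_mul, Real.norm_of_nonneg (by positivity : 0 ≤ 1 / (2 * ν ^ 2))]
    calc 1 / (2 * ν ^ 2) * |∫ v in a..u, f v| ≤ 1 / (2 * ν ^ 2) * C := by
          gcongr
          exact hIntegral u hu
      _ = C / (2 * ν ^ 2) := by ring

end

lemma exists_abs_integral_le_of_neg_two_le : ∃ C > 0, ∀ ⦃ν : ℝ⦄ ⦃f : ℝ → ℝ⦄, EdgeSolution ν f →
    ∀ ⦃a b⦄, -2 ≤ a → a ≤ b → |∫ u in a..b, f u| ≤ C := by
  obtain ⟨C, hC, h⟩ := exists_abs_le_div_edgeWeight_pow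
  refine ⟨4 * C, by positivity, fun ν f S a b ha hab => ?_⟩
  refine abs_integral_le_of_abs_le_div_one_add_sq hC.le hab fun u hu => ?_
  refine (h S (ha.trans hu.1)).1.trans ?_
  gcongr
  exact (one_add_sq_le_edgeWeight_pow_eight u).trans
    (pow_le_pow_right₀ (one_le_edgeWeight u) (by norm_num))

lemma exists_abs_integral_edgeSlope_mul_le_of_neg_two_le :
    ∃ C > 0, ∀ ⦃ν : ℝ⦄ ⦃f : ℝ → ℝ⦄, EdgeSolution ν f →
      ∀ ⦃a b⦄, -2 ≤ a → a ≤ b → |∫ u in a..b, edgeSlope ν u * f u| ≤ C := by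
  obtain ⟨C, hC, h⟩ := exists_abs_le_div_edgeWeight_pow
  refine ⟨4 * C, by positivity, fun ν f S a b ha hab => ?_⟩
  refine abs_integral_le_of_abs_le_div_one_add_sq hC.le hab fun u hu => ?_
  have := edgeWeight_pos u
  calc |edgeSlope ν u * f u| ≤ edgeWeight u ^ 4 * (C / edgeWeight u ^ 16) := by
        rw [abs_mul]
        exact mul_le_mul (edgeWeight_pow_four u ▸ abs_edgeSlope_le S.one_le)
          (h S (ha.trans hu.1)).1 (abs_nonneg _) (by positivity)
    _ = C / edgeWeight u ^ 12 := by field_simp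
    _ ≤ C / (1 + u ^ 2) := by
        gcongr
        exact (one_add_sq_le_edgeWeight_pow_eight u).trans
          (pow_le_pow_right₀ (one_le_edgeWeight u) (by norm_num))

lemma exists_abs_integral_le_of_le : ∃ C > 0, ∀ ⦃ν : ℝ⦄ ⦃f : ℝ → ℝ⦄, EdgeSolution ν f →
    ∀ ⦃a b⦄, -(2 * ν ^ 2) ≤ a → a ≤ b → |∫ u in a..b, f u| ≤ C / edgeWeight (min b 0) ^ 3 := by
  obtain ⟨C, hC, h⟩ := exists_abs_integral_le_of_neg_two_le
  refine ⟨8 * (200 + C), by positivity, fun ν f S a b ha hab => ?_⟩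
  have := edgeWeight_pos (min b 0)
  rcases le_total b (-2) with hb | hb
  · refine (S.abs_integral_le_of_le_neg_two ha hab hb).trans ?_
    rw [min_eq_left (by linarith)] at *
    gcongr
    linarith
  · have hw : edgeWeight (min b 0) ≤ 2 := edgeWeight_le_two (abs_le.2
      ⟨le_min hb (by norm_num), (min_le_right _ _).trans (by norm_num)⟩)
    have hleft : |∫ u in min a (-2)..min b (-2), f u| ≤ 200 :=
      (S.abs_integral_le_of_le_neg_two (le_min ha (by nlinarith [S.one_le]))
        (min_le_min_right _ hab) (min_le_right _ _)).trans
        (div_le_self (by norm_num) (one_le_pow₀ (one_le_edgeWeight _)))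
    have hright : |∫ u in max a (-2)..max b (-2), f u| ≤ C :=
      h S (le_max_right _ _) (max_le_max_right _ hab)
    rw [← integral_min_add_integral_max S.continuous a b (-2), le_div_iff₀ (by positivity),
      mul_comm]
    exact mul_le_mul ((pow_le_pow_left₀ (by positivity) hw 3).trans_eq (by norm_num))
      ((abs_add_le _ _).trans (add_le_add hleft hright)) (abs_nonneg _) (by norm_num)

lemma exists_abs_integral_le : ∃ C > 0, ∀ ⦃ν : ℝ⦄ ⦃f : ℝ → ℝ⦄, EdgeSolution ν f →
    ∀ ⦃a b⦄, -(2 * ν ^ 2) ≤ a → -(2 * ν ^ 2) ≤ b →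
      |∫ u in a..b, f u| ≤ C / edgeWeight (min (max a b) 0) ^ 3 := by
  obtain ⟨C, hC, h⟩ := exists_abs_integral_le_of_le
  refine ⟨C, hC, fun ν f S a b ha hb => ?_⟩
  rcases le_total a b with hab | hab
  · rw [max_eq_right hab]
    exact h S ha hab
  · rw [max_eq_left hab, intervalIntegral.integral_symm, abs_neg]
    exact h S hb hab

lemma exists_abs_integral_le_const : ∃ C > 0, ∀ ⦃ν : ℝ⦄ ⦃f : ℝ → ℝ⦄, EdgeSolution ν f →
    ∀ ⦃a b⦄, -(2 * ν ^ 2) ≤ a → -(2 * ν ^ 2) ≤ b → |∫ u in a..b, f u| ≤ C := by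
  obtain ⟨C, hC, h⟩ := exists_abs_integral_le
  exact ⟨C, hC, fun ν f S a b ha hb => (h S ha hb).trans
    (div_le_self hC.le (one_le_pow₀ (one_le_edgeWeight _)))⟩

lemma exists_abs_integral_edgeSlope_mul_le : ∃ C > 0, ∀ ⦃ν : ℝ⦄ ⦃f : ℝ → ℝ⦄, EdgeSolution ν f →
    ∀ ⦃a b⦄, -(2 * ν ^ 2) ≤ a → a ≤ b → |∫ u in a..b, edgeSlope ν u * f u| ≤ C := by
  obtain ⟨C, hC, h⟩ := exists_abs_integral_le_const
  obtain ⟨D, hD, hR⟩ := exists_abs_integral_edgeSlope_mul_le_of_neg_two_le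
  refine ⟨2 * C + D, by positivity, fun ν f S a b ha hab => ?_⟩
  have ha0 : -(2 * ν ^ 2) ≤ min a 0 := le_min ha (by nlinarith [S.one_le])
  rw [← integral_min_add_integral_max (F := fun u => edgeSlope ν u * f u)
    ((continuous_edgeSlope ν).mul S.continuous) a b 0]
  exact (abs_add_le _ _).trans (add_le_add
    (S.abs_integral_edgeSlope_mul_le ha0 (min_le_min_right _ hab) (min_le_right _ _)
      fun u hu => h S ha0 (ha0.trans hu.1))
    (hR S ((by norm_num : (-2 : ℝ) ≤ 0).trans (le_max_right _ _)) (max_le_max_right _ hab)))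

lemma exists_abs_integral_deriv_div_le : ∃ C > 0, ∀ ⦃ν : ℝ⦄ ⦃f : ℝ → ℝ⦄, EdgeSolution ν f →
    ∀ ⦃a b⦄, -(2 * ν ^ 2) ≤ a → -(2 * ν ^ 2) ≤ b → |∫ u in a..b, deriv f u / ν| ≤ C := by
  obtain ⟨B, hB, hb⟩ := exists_abs_le
  refine ⟨2 * B, by positivity, fun ν f S a b ha hab => ?_⟩
  have hconst : ∀ c, -(2 * ν ^ 2) ≤ c → |f c| ≤ B := fun c hc =>
    (hb S hc).trans (div_le_self hB.le (one_le_edgeWeight c))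
  rw [intervalIntegral.integral_div, intervalIntegral.integral_eq_sub_of_hasDerivAt
    (fun u _ => S.hasDerivAt u) (S.continuous_deriv.intervalIntegrable _ _), abs_div,
    abs_of_pos S.pos]
  calc |f b - f a| / ν ≤ |f b - f a| := div_le_self (abs_nonneg _) S.one_le
    _ ≤ |f b| + |f a| := abs_sub _ _
    _ ≤ 2 * B := by linarith [hconst a ha, hconst b hab]

lemma exists_abs_integral_deriv_div_add_le :
    ∃ C > 0, ∀ ⦃ν : ℝ⦄ ⦃f : ℝ → ℝ⦄, EdgeSolution ν f → ∀ ⦃a b⦄, -(2 * ν ^ 2) ≤ a →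
      -(2 * ν ^ 2) ≤ b → |∫ u in a..b, (deriv f u / ν + edgeSlope ν u * f u)| ≤ C := by
  obtain ⟨C, hC, h⟩ := exists_abs_integral_deriv_div_le
  obtain ⟨D, hD, hs⟩ := exists_abs_integral_edgeSlope_mul_le
  refine ⟨C + D, by positivity, fun ν f S a b ha hb => ?_⟩
  rw [intervalIntegral.integral_add ((S.continuous_deriv.div_const ν).intervalIntegrable _ _)
    (Continuous.intervalIntegrable (u := fun u => edgeSlope ν u * f u)
      ((continuous_edgeSlope ν).mul S.continuous) _ _)]
  refine (abs_add_le _ _).trans (add_le_add (h S ha hb) ?_)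
  rcases le_total a b with hab | hab
  · exact hs S ha hab
  · rw [intervalIntegral.integral_symm, abs_neg]
    exact hs S hb hab

end EdgeSolution

section OscillatoryIntegral

variable {D g g' : ℝ → ℝ} {w C δ T s : ℝ}

lemma hasDerivAt_edgeWeight_pow_three_div (hs : 0 < s) :
    HasDerivAt (fun u => edgeWeight u ^ 3 / u) (-((4 + s) / (4 * (edgeWeight s * s ^ 2)))) s := by
  have := edgeWeight_pos s
  refine (((hasDerivAt_edgeWeight_of_pos hs).pow 3).div (hasDerivAt_id s) hs.ne').congr_deriv ?_
  have hfour := edgeWeight_pow_four s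
  rw [abs_of_pos hs] at hfour
  simp only [id, Pi.pow_apply]
  field_simp
  push_cast
  linear_combination -4 * edgeWeight s ^ 2 * hfour

lemma edgeWeight_pow_three_div_le (hw : 1 ≤ w) (hs : 0 < s) (hsw : 1 ≤ s * w ^ 2) :
    edgeWeight s ^ 3 / s ≤ 2 * w ^ 2 := by
  rw [div_le_iff₀ hs]
  have := edgeWeight_pow_three_le s
  rw [abs_of_pos hs] at this
  nlinarith [le_mul_of_one_le_right hs.le (one_le_pow₀ (n := 2) hw)]

-- Integration by parts, from `D u = g' u / u`.
lemma abs_integral_sub_le_of_abs_primitive_le (hδ : 0 < δ) (hδT : δ ≤ T) (hC : 0 ≤ C)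
    (hD : Continuous D) (hg : ∀ s, HasDerivAt g (g' s) s) (hDg : ∀ s, D s * s = g' s)
    (hgle : ∀ s ∈ Icc δ T, |g s| ≤ C * edgeWeight s ^ 3) :
    |(∫ s in δ..T, D s) - (g T / T - g δ / δ)| ≤ 4 * C * (edgeWeight δ ^ 3 / δ) := by
  have hpos : ∀ s ∈ Icc δ T, 0 < s := fun s hs => hδ.trans_le hs.1
  have hdiff := norm_sub_le_of_norm_deriv_le (E := ℝ)
    (h := fun u => (∫ s in δ..u, D s) - g u / u) (h' := fun u => g u / u ^ 2)
    (R := fun u => -(4 * C) * (edgeWeight u ^ 3 / u))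
    (R' := fun u => -(4 * C) * -((4 + u) / (4 * (edgeWeight u * u ^ 2)))) hδT
    (fun u hu => ?_) (fun u hu => (hasDerivAt_edgeWeight_pow_three_div (hpos u hu)).const_mul _)
    (fun u hu => ?_)
  · have := edgeWeight_pos T
    have hT := hδ.trans_le hδT
    have : 0 ≤ 4 * C * (edgeWeight T ^ 3 / T) := by positivity
    simp only [intervalIntegral.integral_same, zero_sub, Real.norm_eq_abs] at hdiff
    rw [show (∫ s in δ..T, D s) - (g T / T - g δ / δ)
      = (∫ s in δ..T, D s) - g T / T - -(g δ / δ) by ring]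
    linarith
  · have := (hpos u hu).ne'
    refine ((hD.integral_hasStrictDerivAt δ u).hasDerivAt.sub
      ((hg u).div (hasDerivAt_id u) this)).congr_deriv ?_
    simp only [id, ← hDg u]
    field_simp
    ring
  · have hu0 := hpos u hu
    have := edgeWeight_pos u
    have hfour := edgeWeight_pow_four u
    rw [abs_of_pos hu0] at hfour
    rw [Real.norm_eq_abs, abs_div, abs_of_pos (pow_pos hu0 2)]
    calc |g u| / u ^ 2 ≤ C * edgeWeight u ^ 3 / u ^ 2 := by gcongr; exact hgle u hu
      _ = C * (edgeWeight u ^ 4 / (edgeWeight u * u ^ 2)) := by field_simp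
      _ ≤ C * ((4 + u) / (edgeWeight u * u ^ 2)) := by rw [hfour]; gcongr; norm_num
      _ = -(4 * C) * -((4 + u) / (4 * (edgeWeight u * u ^ 2))) := by field_simp

lemma abs_integral_le_of_abs_le_of_abs_primitive_le (hw : 1 ≤ w) (hC : 0 ≤ C) (hT : 0 ≤ T)
    (hD : Continuous D) (hg : ∀ s, HasDerivAt g (g' s) s) (hDg : ∀ s, D s * s = g' s)
    (hDle : ∀ s ∈ Icc 0 T, s ≤ 1 → |D s| ≤ C * w ^ 2)
    (hgle : ∀ s ∈ Icc 0 T, |g s| ≤ C / w ^ 2 * edgeWeight s ^ 3) :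
    |∫ s in (0 : ℝ)..T, D s| ≤ 13 * C := by
  have hw2 : 1 ≤ w ^ 2 := one_le_pow₀ hw
  have hδ : 0 < 1 / w ^ 2 := by positivity
  have hnear : ∀ t ∈ Icc 0 T, t ≤ 1 / w ^ 2 → |∫ s in (0 : ℝ)..t, D s| ≤ C := fun t ht htw => by
    have hIntegral := intervalIntegral.norm_integral_le_of_norm_le_const (a := 0) (b := t) (f := D)
      (C := C * w ^ 2) fun s hs => by
        rw [uIoc_of_le ht.1] at hs
        exact hDle s ⟨hs.1.le, hs.2.trans ht.2⟩
          ((hs.2.trans htw).trans (div_le_self zero_le_one hw2))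
    rw [Real.norm_eq_abs, sub_zero, abs_of_nonneg ht.1] at hIntegral
    calc |∫ s in (0 : ℝ)..t, D s| ≤ C * w ^ 2 * t := hIntegral
      _ ≤ C * w ^ 2 * (1 / w ^ 2) := by gcongr
      _ = C := by field_simp
  rcases le_total T (1 / w ^ 2) with hTw | hTw
  · linarith [hnear T (right_mem_Icc.2 hT) hTw]
  have hratio : ∀ s ∈ Icc (1 / w ^ 2) T, C / w ^ 2 * (edgeWeight s ^ 3 / s) ≤ 2 * C := fun s hs =>
    calc C / w ^ 2 * (edgeWeight s ^ 3 / s) ≤ C / w ^ 2 * (2 * w ^ 2) := by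
          gcongr
          exact edgeWeight_pow_three_div_le hw (hδ.trans_le hs.1)
            ((div_le_iff₀ (by positivity)).1 hs.1)
      _ = 2 * C := by field_simp
  have hbdry : ∀ s ∈ Icc (1 / w ^ 2) T, |g s / s| ≤ 2 * C := fun s hs => by
    have hs0 := hδ.trans_le hs.1
    rw [abs_div, abs_of_pos hs0]
    refine le_trans ?_ (hratio s hs)
    rw [← mul_div_assoc]
    gcongr
    exact hgle s ⟨hs0.le, hs.2⟩
  have hfar := abs_integral_sub_le_of_abs_primitive_le hδ hTw (by positivity) hD hg hDg
    fun s hs => hgle s ⟨hδ.le.trans hs.1, hs.2⟩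
  rw [← intervalIntegral.integral_add_adjacent_intervals
    (hD.intervalIntegrable (μ := volume) 0 (1 / w ^ 2)) (hD.intervalIntegrable _ T)]
  have hn := abs_le.1 (hnear _ ⟨hδ.le, hTw⟩ le_rfl)
  have hl := abs_le.1 (hbdry _ (left_mem_Icc.2 hTw))
  have hr := abs_le.1 (hbdry _ (right_mem_Icc.2 hTw))
  have hR := hratio _ (left_mem_Icc.2 hTw)
  have hf := abs_le.1 hfar
  rw [abs_le]
  constructor <;> linarith [hf.1, hf.2, hn.1, hn.2, hl.1, hl.2, hr.1, hr.2]

end OscillatoryIntegral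

section Kernel

/-- The numerator `f(x) f'(u) - f'(x) f(u)` of the Christoffel–Darboux kernel of `f`. -/
noncomputable def kernelNumerator (f : ℝ → ℝ) (x u : ℝ) : ℝ := f x * deriv f u - deriv f x * f u

/-- The primitive of `kernelNumerator f x` with value `f(x)²` at `x`. -/
noncomputable def kernelPrimitive (f : ℝ → ℝ) (x u : ℝ) : ℝ :=
  f x * f u - deriv f x * ∫ v in x..u, f v

namespace EdgeSolution

variable {ν : ℝ} {f : ℝ → ℝ}

lemma hasDerivAt_kernelPrimitive (S : EdgeSolution ν f) (x u : ℝ) :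
    HasDerivAt (kernelPrimitive f x) (kernelNumerator f x u) u :=
  ((S.hasDerivAt u).const_mul (f x)).sub
    ((S.continuous.integral_hasStrictDerivAt x u).hasDerivAt.const_mul (deriv f x))

lemma hasDerivAt_kernelNumerator (S : EdgeSolution ν f) (x u : ℝ) :
    HasDerivAt (kernelNumerator f x)
      (f x * (edgePotential ν u * f u) - deriv f x * deriv f u) u :=
  ((S.hasDerivAt_deriv u).const_mul (f x)).sub ((S.hasDerivAt u).const_mul (deriv f x))

lemma continuous_dslope_kernelNumerator (S : EdgeSolution ν f) (x : ℝ) :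
    Continuous (dslope (kernelNumerator f x) x) := by
  refine continuous_iff_continuousAt.2 fun u => ?_
  rcases eq_or_ne u x with rfl | h
  · exact continuousAt_dslope_same.2 (S.hasDerivAt_kernelNumerator u u).differentiableAt
  · exact (continuousAt_dslope_of_ne h).2 (S.hasDerivAt_kernelNumerator x u).continuousAt

lemma exists_abs_mul_le : ∃ C > 0, ∀ ⦃ν : ℝ⦄ ⦃f : ℝ → ℝ⦄, EdgeSolution ν f →
    ∀ ⦃x u⦄, -(2 * ν ^ 2) ≤ x → -(2 * ν ^ 2) ≤ u →
      |f x * f u| ≤ C * edgeWeight (u - x) ^ 3 / edgeWeight x ^ 2 := by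
  obtain ⟨B, hB, hb⟩ := exists_abs_le
  refine ⟨B ^ 2, by positivity, fun ν f S x u hx hu => ?_⟩
  have := edgeWeight_pos x
  have := edgeWeight_pos u
  have := edgeWeight_pos (u - x)
  have hw : edgeWeight x ≤ edgeWeight u * edgeWeight (u - x) :=
    edgeWeight_le_mul (by simpa using abs_sub u (u - x))
  calc |f x * f u| = |f x| * |f u| := abs_mul _ _
    _ ≤ (B / edgeWeight x) * (B / edgeWeight u) := by gcongr; exacts [hb S hx, hb S hu]
    _ ≤ (B / edgeWeight x) * (B / (edgeWeight x / edgeWeight (u - x))) := by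
      gcongr
      rwa [div_le_iff₀ (by positivity)]
    _ = B ^ 2 * edgeWeight (u - x) / edgeWeight x ^ 2 := by field_simp
    _ ≤ B ^ 2 * edgeWeight (u - x) ^ 3 / edgeWeight x ^ 2 := by
      gcongr
      exact le_self_pow₀ (one_le_edgeWeight _) (by norm_num)

lemma exists_abs_deriv_mul_integral_le_of_nonpos :
    ∃ C > 0, ∀ ⦃ν : ℝ⦄ ⦃f : ℝ → ℝ⦄, EdgeSolution ν f →
      ∀ ⦃x u⦄, -(2 * ν ^ 2) ≤ x → -(2 * ν ^ 2) ≤ u → x ≤ 0 →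
        |deriv f x * ∫ v in x..u, f v| ≤ C * edgeWeight (u - x) ^ 3 / edgeWeight x ^ 2 := by
  obtain ⟨B, hB, hb⟩ := exists_abs_deriv_le
  obtain ⟨C, hC, h⟩ := exists_abs_integral_le
  refine ⟨B * C, by positivity, fun ν f S x u hx hu hx0 => ?_⟩
  set z := min (max x u) 0
  have := edgeWeight_pos x
  have := edgeWeight_pos z
  have := edgeWeight_pos (u - x)
  have hz0 : z ≤ 0 := min_le_right _ _
  have hz : z ≤ x + |u - x| := (min_le_left _ _).trans
    (max_le (by linarith [abs_nonneg (u - x)]) (by linarith [le_abs_self (u - x)]))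
  have hw : edgeWeight x ≤ edgeWeight z * edgeWeight (u - x) :=
    edgeWeight_le_mul (by rw [abs_of_nonpos hx0, abs_of_nonpos hz0]; linarith)
  calc |deriv f x * ∫ v in x..u, f v| = |deriv f x| * |∫ v in x..u, f v| := abs_mul _ _
    _ ≤ (B * edgeWeight x) * (C / edgeWeight z ^ 3) := by
      gcongr
      exacts [hb S hx, h S hx hu]
    _ ≤ (B * edgeWeight x) * (C / (edgeWeight x / edgeWeight (u - x)) ^ 3) := by
      gcongr
      rwa [div_le_iff₀ (by positivity)]
    _ = B * C * edgeWeight (u - x) ^ 3 / edgeWeight x ^ 2 := by field_simp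

lemma exists_abs_deriv_mul_integral_le_of_nonneg :
    ∃ C > 0, ∀ ⦃ν : ℝ⦄ ⦃f : ℝ → ℝ⦄, EdgeSolution ν f →
      ∀ ⦃x u⦄, 0 ≤ x → -(2 * ν ^ 2) ≤ u →
        |deriv f x * ∫ v in x..u, f v| ≤ C * edgeWeight (u - x) ^ 3 / edgeWeight x ^ 2 := by
  obtain ⟨C, hC, h⟩ := exists_abs_integral_le_const
  obtain ⟨D, hD, hd⟩ := exists_abs_le_div_edgeWeight_pow
  refine ⟨D * C, by positivity, fun ν f S x u hx hu => ?_⟩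
  have hw := one_le_edgeWeight x
  have hw' := one_le_edgeWeight (u - x)
  calc |deriv f x * ∫ v in x..u, f v| = |deriv f x| * |∫ v in x..u, f v| := abs_mul _ _
    _ ≤ D / edgeWeight x ^ 16 * C := by
      gcongr
      exacts [(hd S (by linarith)).2, h S (by nlinarith [sq_nonneg ν]) hu]
    _ = D * C * 1 / edgeWeight x ^ 16 := by ring
    _ ≤ D * C * edgeWeight (u - x) ^ 3 / edgeWeight x ^ 2 := by
      gcongr
      exacts [one_le_pow₀ hw', by norm_num]

lemma exists_abs_kernelPrimitive_le : ∃ C > 0, ∀ ⦃ν : ℝ⦄ ⦃f : ℝ → ℝ⦄, EdgeSolution ν f →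
    ∀ ⦃x u⦄, -(2 * ν ^ 2) ≤ x → -(2 * ν ^ 2) ≤ u →
      |kernelPrimitive f x u| ≤ C / edgeWeight x ^ 2 * edgeWeight (u - x) ^ 3 := by
  obtain ⟨A, hA, ha⟩ := exists_abs_mul_le
  obtain ⟨B, hB, hb⟩ := exists_abs_deriv_mul_integral_le_of_nonpos
  obtain ⟨C, hC, hc⟩ := exists_abs_deriv_mul_integral_le_of_nonneg
  refine ⟨A + (B + C), by positivity, fun ν f S x u hx hu => ?_⟩
  have := edgeWeight_pos (u - x)
  have hIntegral : |deriv f x * ∫ v in x..u, f v|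
      ≤ (B + C) * edgeWeight (u - x) ^ 3 / edgeWeight x ^ 2 := by
    rcases le_total x 0 with hx0 | hx0
    · exact (hb S hx hu hx0).trans (by gcongr; linarith)
    · exact (hc S hx0 hu).trans (by gcongr; linarith)
  calc |kernelPrimitive f x u| ≤ |f x * f u| + |deriv f x * ∫ v in x..u, f v| := abs_sub _ _
    _ ≤ A * edgeWeight (u - x) ^ 3 / edgeWeight x ^ 2
        + (B + C) * edgeWeight (u - x) ^ 3 / edgeWeight x ^ 2 := add_le_add (ha S hx hu) hIntegral
    _ = (A + (B + C)) / edgeWeight x ^ 2 * edgeWeight (u - x) ^ 3 := by ring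

lemma exists_abs_kernelNumerator_le : ∃ C > 0, ∀ ⦃ν : ℝ⦄ ⦃f : ℝ → ℝ⦄, EdgeSolution ν f →
    ∀ ⦃x u⦄, -(2 * ν ^ 2) ≤ x → -(2 * ν ^ 2) ≤ u → |kernelNumerator f x u| ≤
      C * (edgeWeight u / edgeWeight x + edgeWeight x / edgeWeight u) := by
  obtain ⟨A, hA, ha⟩ := exists_abs_le
  obtain ⟨B, hB, hb⟩ := exists_abs_deriv_le
  refine ⟨A * B, by positivity, fun ν f S x u hx hu => ?_⟩
  have := edgeWeight_pos x
  have := edgeWeight_pos u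
  calc |kernelNumerator f x u| ≤ |f x * deriv f u| + |deriv f x * f u| := abs_sub _ _
    _ = |f x| * |deriv f u| + |deriv f x| * |f u| := by rw [abs_mul, abs_mul]
    _ ≤ (A / edgeWeight x) * (B * edgeWeight u) + (B * edgeWeight x) * (A / edgeWeight u) := by
      gcongr
      exacts [ha S hx, hb S hu, hb S hx, ha S hu]
    _ = A * B * (edgeWeight u / edgeWeight x + edgeWeight x / edgeWeight u) := by ring

lemma exists_abs_deriv_kernelNumerator_le : ∃ C > 0, ∀ ⦃ν : ℝ⦄ ⦃f : ℝ → ℝ⦄, EdgeSolution ν f →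
    ∀ ⦃x u⦄, -(2 * ν ^ 2) ≤ x → -(2 * ν ^ 2) ≤ u →
      |f x * (edgePotential ν u * f u) - deriv f x * deriv f u| ≤
        C * (edgeWeight u ^ 3 / edgeWeight x + edgeWeight x * edgeWeight u) := by
  obtain ⟨A, hA, ha⟩ := exists_abs_le
  obtain ⟨B, hB, hb⟩ := exists_abs_deriv_le
  obtain ⟨D, hD, hd⟩ := exists_abs_edgePotential_mul_le
  refine ⟨A * D + B ^ 2, by positivity, fun ν f S x u hx hu => ?_⟩
  have := edgeWeight_pos x
  have := edgeWeight_pos u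
  calc |f x * (edgePotential ν u * f u) - deriv f x * deriv f u|
      ≤ |f x * (edgePotential ν u * f u)| + |deriv f x * deriv f u| := abs_sub _ _
    _ = |f x| * |edgePotential ν u * f u| + |deriv f x| * |deriv f u| := by
      rw [abs_mul (f x), abs_mul (deriv f x)]
    _ ≤ (A / edgeWeight x) * (D * edgeWeight u ^ 3)
        + (B * edgeWeight x) * (B * edgeWeight u) := by
      gcongr
      exacts [ha S hx, hd S hu, hb S hx, hb S hu]
    _ = A * D * (edgeWeight u ^ 3 / edgeWeight x) + B ^ 2 * (edgeWeight x * edgeWeight u) := by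
      ring
    _ ≤ (A * D + B ^ 2) * (edgeWeight u ^ 3 / edgeWeight x)
        + (A * D + B ^ 2) * (edgeWeight x * edgeWeight u) := by
      gcongr
      exacts [le_add_of_nonneg_right (by positivity), le_add_of_nonneg_left (by positivity)]
    _ = (A * D + B ^ 2) * (edgeWeight u ^ 3 / edgeWeight x + edgeWeight x * edgeWeight u) :=
      (mul_add _ _ _).symm

lemma exists_abs_deriv_kernelNumerator_le_of_abs_sub_le_one :
    ∃ C > 0, ∀ ⦃ν : ℝ⦄ ⦃f : ℝ → ℝ⦄, EdgeSolution ν f →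
      ∀ ⦃x u⦄, -(2 * ν ^ 2) ≤ x → -(2 * ν ^ 2) ≤ u → |u - x| ≤ 1 →
        |f x * (edgePotential ν u * f u) - deriv f x * deriv f u| ≤ C * edgeWeight x ^ 2 := by
  obtain ⟨C, hC, h⟩ := exists_abs_deriv_kernelNumerator_le
  refine ⟨10 * C, by positivity, fun ν f S x u hx hu hux => (h S hx hu).trans ?_⟩
  have := edgeWeight_pos x
  have := edgeWeight_pos u
  have hw : edgeWeight u ≤ 2 * edgeWeight x :=
    calc edgeWeight u ≤ edgeWeight x * edgeWeight (u - x) :=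
          edgeWeight_le_mul (by simpa using abs_add_le x (u - x))
      _ ≤ edgeWeight x * 2 := by gcongr; exact edgeWeight_le_two (by linarith)
      _ = 2 * edgeWeight x := mul_comm _ _
  calc C * (edgeWeight u ^ 3 / edgeWeight x + edgeWeight x * edgeWeight u)
      ≤ C * ((2 * edgeWeight x) ^ 3 / edgeWeight x + edgeWeight x * (2 * edgeWeight x)) := by
        gcongr
    _ = 10 * C * edgeWeight x ^ 2 := by field_simp; ring

lemma exists_abs_dslope_kernelNumerator_le :
    ∃ C > 0, ∀ ⦃ν : ℝ⦄ ⦃f : ℝ → ℝ⦄, EdgeSolution ν f → ∀ ⦃x u⦄, -(2 * ν ^ 2) ≤ x →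
      -(2 * ν ^ 2) ≤ u → |u - x| ≤ 1 →
        |dslope (kernelNumerator f x) x u| ≤ C * edgeWeight x ^ 2 := by
  obtain ⟨C, hC, h⟩ := exists_abs_deriv_kernelNumerator_le_of_abs_sub_le_one
  refine ⟨C, hC, fun ν f S x u hx hu hux => ?_⟩
  rcases eq_or_ne u x with rfl | hne
  · rw [dslope_same, (S.hasDerivAt_kernelNumerator u u).deriv]
    exact h S hu hu hux
  rw [dslope_of_ne _ hne, slope_def_field, abs_div, div_le_iff₀ (abs_pos.2 (sub_ne_zero.2 hne))]
  exact (convex_uIcc x u).norm_image_sub_le_of_norm_hasDerivWithin_le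
    (fun v _ => (S.hasDerivAt_kernelNumerator x v).hasDerivWithinAt)
    (fun v hv => h S hx ((le_min hx hu).trans hv.1) ((abs_sub_left_of_mem_uIcc hv).trans hux))
    left_mem_uIcc right_mem_uIcc

lemma exists_abs_integral_dslope_kernelNumerator_le :
    ∃ C > 0, ∀ ⦃ν : ℝ⦄ ⦃f : ℝ → ℝ⦄, EdgeSolution ν f → ∀ ⦃x y⦄, -(2 * ν ^ 2) ≤ x →
      -(2 * ν ^ 2) ≤ y → |∫ u in x..y, dslope (kernelNumerator f x) x u| ≤ C := by
  obtain ⟨C, hC, h⟩ := exists_abs_kernelPrimitive_le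
  obtain ⟨D, hD, hd⟩ := exists_abs_dslope_kernelNumerator_le
  refine ⟨13 * (C + D), by positivity, fun ν f S x y hx hy => ?_⟩
  obtain ⟨σ, hσ, hσy⟩ : ∃ σ : ℝ, |σ| = 1 ∧ x + σ * |y - x| = y := by
    rcases le_total x y with hxy | hxy
    · exact ⟨1, abs_one, by rw [abs_of_nonneg (sub_nonneg.2 hxy)]; ring⟩
    · exact ⟨-1, by simp, by rw [abs_of_nonpos (sub_nonpos.2 hxy)]; ring⟩
  have hdist : ∀ {s}, 0 ≤ s → |x + σ * s - x| = s := fun hs => by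
    rw [add_sub_cancel_left, abs_mul, hσ, one_mul, abs_of_nonneg hs]
  have hseg : ∀ s ∈ Icc 0 |y - x|, -(2 * ν ^ 2) ≤ x + σ * s := fun s hs => by
    rcases eq_or_eq_neg_of_abs_eq hσ with rfl | rfl <;> linarith [hs.1, hs.2]
  have hsq : σ * σ = 1 := by rw [← abs_mul_abs_self, hσ, one_mul]
  have hkey := abs_integral_le_of_abs_le_of_abs_primitive_le
    (D := fun s => σ * dslope (kernelNumerator f x) x (x + σ * s))
    (g := fun s => σ * kernelPrimitive f x (x + σ * s))
    (g' := fun s => kernelNumerator f x (x + σ * s)) (C := C + D) (one_le_edgeWeight x)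
    (by positivity) (abs_nonneg (y - x))
    (((S.continuous_dslope_kernelNumerator x).comp (by fun_prop)).const_mul σ)
    (fun s => ?_) (fun s => ?_) (fun s hs hs1 => ?_) (fun s hs => ?_)
  · rwa [intervalIntegral.integral_const_mul, intervalIntegral.mul_integral_comp_add_mul, mul_zero,
      add_zero, hσy] at hkey
  · refine (((S.hasDerivAt_kernelPrimitive x (x + σ * s)).comp s
      (((hasDerivAt_id s).const_mul σ).const_add x)).const_mul σ).congr_deriv ?_
    linear_combination kernelNumerator f x (x + σ * s) * hsq
  · have hslope := sub_smul_dslope (kernelNumerator f x) x (x + σ * s)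
    simp only [add_sub_cancel_left, smul_eq_mul, kernelNumerator, mul_comm (deriv f x), sub_self,
      sub_zero] at hslope ⊢
    linarith
  · rw [abs_mul, hσ, one_mul]
    refine (hd S hx (hseg s hs) ((hdist hs.1).trans_le hs1)).trans ?_
    gcongr
    linarith
  · have := edgeWeight_pos s
    have hbound := h S hx (hseg s hs)
    rw [← edgeWeight_abs (x + σ * s - x), hdist hs.1] at hbound
    rw [abs_mul, hσ, one_mul]
    refine hbound.trans ?_
    gcongr
    linarith

end EdgeSolution

end Kernel

section Hermite

open Polynomial

lemma derivative_hermite_succ (n : ℕ) :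
    derivative (hermite (n + 1)) = C ((n : ℤ) + 1) * hermite n := by
  induction n with
  | zero => simp
  | succ n ih =>
    rw [hermite_succ (n + 1), derivative_sub, derivative_mul, ih, derivative_C_mul, derivative_X,
      hermite_succ n]
    push_cast
    simp only [C_add, C_1]
    ring

lemma derivative_derivative_hermite (n : ℕ) :
    derivative (derivative (hermite n)) = X * derivative (hermite n) - C (n : ℤ) * hermite n := by
  have h := derivative_hermite_succ n
  rw [hermite_succ n, derivative_sub, derivative_mul, derivative_X, C_add, C_1] at h
  linear_combination -h

lemma hermite_comp_neg_X (n : ℕ) : (hermite n).comp (-X) = C ((-1) ^ n) * hermite n := by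
  induction n with
  | zero => simp
  | succ n ih =>
    have h := congrArg derivative ih
    rw [derivative_comp, derivative_C_mul] at h
    rw [hermite_succ]
    simp only [derivative_neg, derivative_X, sub_comp, mul_comp, X_comp, ih, pow_succ, C_mul, C_neg,
      C_1] at h ⊢
    linear_combination h

lemma aeval_zero_hermite_add_two (n : ℕ) :
    aeval (0 : ℝ) (hermite (n + 2)) = -((n + 1) * aeval (0 : ℝ) (hermite n)) := by
  rw [hermite_succ, derivative_hermite_succ]
  simp

-- `Ĥ_{2m}(0) = ± (2m - 1)‼`.
lemma aeval_zero_hermite_pow_four_mul_le (m : ℕ) :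
    aeval (0 : ℝ) (hermite (2 * m)) ^ 4 * (2 * m + 1) ≤ ((2 * m).factorial : ℝ) ^ 2 := by
  induction m with
  | zero => simp
  | succ m ih =>
    rw [mul_add_one 2 m, aeval_zero_hermite_add_two, Nat.factorial_succ, Nat.factorial_succ]
    push_cast
    set h := aeval (0 : ℝ) (hermite (2 * m))
    set F := ((2 * m).factorial : ℝ)
    calc (-((2 * (m : ℝ) + 1) * h)) ^ 4 * (2 * (m + 1) + 1)
        = (h ^ 4 * (2 * m + 1)) * ((2 * m + 1) ^ 2 * ((2 * m + 1) * (2 * m + 3))) := by ring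
      _ ≤ F ^ 2 * ((2 * m + 1) ^ 2 * (2 * m + 2) ^ 2) := by
        gcongr
        nlinarith
      _ = ((2 * m + 1 + 1) * ((2 * m + 1) * F)) ^ 2 := by ring

lemma tendsto_aeval_mul_exp_neg_sq_div_two {R : Type*} [CommSemiring R] [Algebra R ℝ] (P : R[X]) :
    Tendsto (fun t : ℝ => aeval t P * Real.exp (-t ^ 2 / 2)) atTop (nhds 0) := by
  have hexp := ((P.map (algebraMap R ℝ)).tendsto_div_exp_atTop.abs).mul_const (Real.exp 1)
  rw [abs_zero, zero_mul] at hexp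
  refine squeeze_zero_norm (fun t => ?_) hexp
  rw [Real.norm_eq_abs, abs_mul, abs_div, Real.abs_exp, Real.abs_exp, div_mul_eq_mul_div,
    mul_div_assoc, ← Real.exp_sub, eval_map_algebraMap]
  gcongr
  nlinarith [sq_nonneg (t - 1)]

end Hermite

section Oscillator

open Polynomial

variable {n : ℕ} {t : ℝ}

/-- The normalization constant of the oscillator function `φ_n`. -/
noncomputable def oscNorm (n : ℕ) : ℝ :=
  (2 * Real.pi) ^ (-(1 : ℝ) / 4) * (n.factorial : ℝ) ^ (-(1 : ℝ) / 2)

lemma oscNorm_pow_four (n : ℕ) : oscNorm n ^ 4 = 1 / (2 * Real.pi * (n.factorial : ℝ) ^ 2) := by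
  rw [oscNorm, mul_pow, ← Real.rpow_mul_natCast (by positivity),
    ← Real.rpow_mul_natCast (by positivity), show -(1 : ℝ) / 4 * (4 : ℕ) = -1 by norm_num,
    show -(1 : ℝ) / 2 * (4 : ℕ) = -(2 : ℕ) by norm_num, Real.rpow_neg_one,
    Real.rpow_neg (by positivity), Real.rpow_natCast, one_div, mul_inv (2 * Real.pi)]

lemma sqrt_mul_oscNorm_succ (n : ℕ) : √((n : ℝ) + 1) * oscNorm (n + 1) = oscNorm n := by
  have hcancel : √((n : ℝ) + 1) * ((n : ℝ) + 1) ^ (-(1 : ℝ) / 2) = 1 := by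
    rw [Real.sqrt_eq_rpow, ← Real.rpow_add (by positivity)]
    norm_num
  rw [oscNorm, oscNorm, Nat.factorial_succ, Nat.cast_mul, Nat.cast_succ,
    Real.mul_rpow (x := (n : ℝ) + 1) (by positivity) (by positivity)]
  linear_combination (2 * Real.pi) ^ (-(1 : ℝ) / 4) * (n.factorial : ℝ) ^ (-(1 : ℝ) / 2) * hcancel

lemma hermiteP_eq_aeval (n : ℕ) (x : ℝ) : hermiteP n x = aeval x (hermite n) := by
  rw [hermite_eq_deriv_gaussian', hermiteP, iteratedDeriv_eq_iterate]
  simp only [neg_div]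
  ring

lemma osc_eq (n : ℕ) (t : ℝ) :
    osc n t = oscNorm n * Real.exp (-t ^ 2 / 4) * aeval t (hermite n) := by
  rw [osc, hermiteP_eq_aeval, oscNorm]

lemma hasDerivAt_exp_neg_sq_div_four (t : ℝ) :
    HasDerivAt (fun s : ℝ => Real.exp (-s ^ 2 / 4)) (Real.exp (-t ^ 2 / 4) * (-t / 2)) t := by
  refine (((hasDerivAt_id t).pow 2).neg.div_const 4).exp.congr_deriv ?_
  simp only [Pi.neg_apply, Pi.pow_apply, id]
  ring

lemma hasDerivAt_osc_aeval (n : ℕ) (t : ℝ) :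
    HasDerivAt (osc n) (oscNorm n * Real.exp (-t ^ 2 / 4) *
      (aeval t (derivative (hermite n)) - t / 2 * aeval t (hermite n))) t := by
  rw [show osc n = _ from funext (osc_eq n)]
  refine (((hasDerivAt_exp_neg_sq_div_four t).const_mul (oscNorm n)).mul
    ((hermite n).hasDerivAt_aeval t)).congr_deriv ?_
  ring

lemma deriv_osc (n : ℕ) (t : ℝ) : deriv (osc n) t = oscNorm n * Real.exp (-t ^ 2 / 4) *
    (aeval t (derivative (hermite n)) - t / 2 * aeval t (hermite n)) :=
  (hasDerivAt_osc_aeval n t).deriv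

lemma hasDerivAt_osc (n : ℕ) (t : ℝ) : HasDerivAt (osc n) (deriv (osc n) t) t :=
  (hasDerivAt_osc_aeval n t).differentiableAt.hasDerivAt

lemma hasDerivAt_deriv_osc (n : ℕ) (t : ℝ) :
    HasDerivAt (deriv (osc n)) ((t ^ 2 / 4 - n - 1 / 2) * osc n t) t := by
  rw [show deriv (osc n) = _ from funext (deriv_osc n)]
  refine (((hasDerivAt_exp_neg_sq_div_four t).const_mul (oscNorm n)).mul
    (((derivative (hermite n)).hasDerivAt_aeval t).sub
      (((hasDerivAt_id t).div_const 2).mul ((hermite n).hasDerivAt_aeval t)))).congr_deriv ?_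
  rw [osc_eq, derivative_derivative_hermite]
  simp only [map_sub, map_mul, map_natCast, aeval_X, id, Pi.sub_apply,
    Pi.mul_apply]
  ring

lemma deriv_osc_succ (n : ℕ) (t : ℝ) :
    deriv (osc (n + 1)) t = √((n : ℝ) + 1) * osc n t - t / 2 * osc (n + 1) t := by
  have hsq : √((n : ℝ) + 1) * √((n : ℝ) + 1) = n + 1 := Real.mul_self_sqrt (by positivity)
  rw [osc_eq, osc_eq, deriv_osc, derivative_hermite_succ, ← sqrt_mul_oscNorm_succ n]
  simp only [map_mul, map_add, map_natCast, map_one]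
  linear_combination -(oscNorm (n + 1) * Real.exp (-t ^ 2 / 4) * aeval t (hermite n)) * hsq

lemma osc_neg (hn : Even n) (t : ℝ) : osc n (-t) = osc n t := by
  have h := congrArg (aeval t) (hermite_comp_neg_X n)
  rw [aeval_comp, hn.neg_one_pow, C_1, one_mul, map_neg, aeval_X] at h
  rw [osc_eq, osc_eq, h, neg_sq]

lemma deriv_osc_zero (hn : Even n) : deriv (osc n) 0 = 0 := by
  have h := deriv_comp_neg (osc n) 0
  rw [show (fun t => osc n (-t)) = osc n from funext (osc_neg hn), neg_zero] at h
  linarith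

lemma osc_zero_pow_four_mul_le (hn : Even n) : osc n 0 ^ 4 * n ≤ 1 := by
  obtain ⟨m, rfl⟩ := hn
  rw [← two_mul, osc_eq, zero_pow two_ne_zero, neg_zero, zero_div, Real.exp_zero, mul_one, mul_pow,
    oscNorm_pow_four]
  push_cast
  set h := aeval (0 : ℝ) (hermite (2 * m))
  have : (0 : ℝ) < (2 * m).factorial := by positivity
  calc 1 / (2 * Real.pi * ((2 * m).factorial : ℝ) ^ 2) * h ^ 4 * (2 * m)
      = 1 / (2 * Real.pi * ((2 * m).factorial : ℝ) ^ 2) * (h ^ 4 * (2 * m)) := by ring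
    _ ≤ 1 / (2 * Real.pi * ((2 * m).factorial : ℝ) ^ 2) * ((2 * m).factorial : ℝ) ^ 2 := by
      gcongr
      refine le_trans ?_ (aeval_zero_hermite_pow_four_mul_le m)
      gcongr
      linarith
    _ = 1 / (2 * Real.pi) := by field_simp
    _ ≤ 1 := (div_le_one (by positivity)).2 (by linarith [Real.pi_gt_three])

lemma exp_neg_sq_div_two (t : ℝ) :
    Real.exp (-t ^ 2 / 2) = Real.exp (-t ^ 2 / 4) * Real.exp (-t ^ 2 / 4) := by
  rw [← Real.exp_add]
  ring_nf

lemma tendsto_osc_mul_deriv_osc (n : ℕ) :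
    Tendsto (fun t => osc n t * deriv (osc n) t) atTop (nhds 0) := by
  have h := (tendsto_aeval_mul_exp_neg_sq_div_two
    (2 * hermite n * derivative (hermite n) - X * hermite n ^ 2)).const_mul (oscNorm n ^ 2 / 2)
  rw [mul_zero] at h
  refine h.congr fun t => ?_
  rw [osc_eq, deriv_osc, exp_neg_sq_div_two]
  simp only [map_sub, map_mul, map_pow, aeval_X, map_ofNat]
  ring

lemma tendsto_deriv_osc_sq_sub (n : ℕ) :
    Tendsto (fun t => deriv (osc n) t ^ 2 - (t ^ 2 / 4 - n - 1 / 2) * osc n t ^ 2) atTop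
      (nhds 0) := by
  have h := (tendsto_aeval_mul_exp_neg_sq_div_two (2 * derivative (hermite n) ^ 2
    - 2 * X * hermite n * derivative (hermite n)
    + (2 * (n : ℤ[X]) + 1) * hermite n ^ 2)).const_mul (oscNorm n ^ 2 / 2)
  rw [mul_zero] at h
  refine h.congr fun t => ?_
  rw [osc_eq, deriv_osc, exp_neg_sq_div_two]
  simp only [map_sub, map_add, map_mul, map_pow, aeval_X, map_ofNat, map_natCast, map_one]
  ring

end Oscillator

section Reflection

variable {f : ℝ → ℝ} {c : ℝ}

lemma integrable_of_reflect (hf : ∀ x, f (2 * c - x) = f x) (hi : IntegrableOn f (Ioi c)) :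
    Integrable f := by
  have hpre : (fun x => 2 * c - x) ⁻¹' Ioi c = Iio c := by
    rw [preimage_const_sub_Ioi]
    ring_nf
  have hleft := ((Measure.measurePreserving_sub_left volume (2 * c)).integrableOn_comp_preimage
    (MeasurableEquiv.subLeft (2 * c)).measurableEmbedding).2 hi
  rw [hpre, show f ∘ (fun x => 2 * c - x) = f from funext hf] at hleft
  rw [← integrableOn_univ, ← Iic_union_Ioi (a := c)]
  exact ((integrableOn_Iic_iff_integrableOn_Iio (by simp)).2 hleft).union hi

lemma integral_Iic_eq_integral_Ioi_of_reflect (hf : ∀ x, f (2 * c - x) = f x) :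
    ∫ v in Iic c, f v = ∫ v in Ioi c, f v := by
  have hpre : (fun x => 2 * c - x) ⁻¹' Ioi c = Iio c := by
    rw [preimage_const_sub_Ioi]
    ring_nf
  have h := (Measure.measurePreserving_sub_left volume (2 * c)).setIntegral_preimage_emb
    (MeasurableEquiv.subLeft (2 * c)).measurableEmbedding f (Ioi c)
  rw [← h, hpre, integral_Iic_eq_integral_Iio]
  simp only [hf]

lemma epsF_eq_sub (hi : Integrable f) (y : ℝ) :
    epsF f y = 1 / 2 * ((∫ v in Iic y, f v) - ∫ v in Ioi y, f v) := by
  have hsign : (fun v => Real.sign (y - v) * f v)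
      = fun v => (Iio y).indicator f v - (Ioi y).indicator f v := by
    funext v
    rcases lt_trichotomy v y with h | rfl | h
    · simp [Real.sign_of_pos (sub_pos.2 h), h, h.le]
    · simp
    · simp [Real.sign_of_neg (sub_neg.2 h), h, h.le]
  rw [epsF, hsign, integral_sub (hi.indicator measurableSet_Iio) (hi.indicator measurableSet_Ioi),
    integral_indicator measurableSet_Iio, integral_indicator measurableSet_Ioi,
    integral_Iic_eq_integral_Iio]

lemma epsF_eq_integral_of_reflect (hf : ∀ x, f (2 * c - x) = f x) (hi : Integrable f) (y : ℝ) :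
    epsF f y = ∫ v in c..y, f v := by
  have hc := intervalIntegral.integral_Iic_add_Ioi (b := c) hi.integrableOn hi.integrableOn
  have hy := intervalIntegral.integral_Iic_add_Ioi (b := y) hi.integrableOn hi.integrableOn
  have hcy := intervalIntegral.integral_Iic_sub_Iic (a := c) (b := y) hi.integrableOn
    hi.integrableOn
  rw [epsF_eq_sub hi]
  linarith [integral_Iic_eq_integral_Ioi_of_reflect hf]

end Reflection

lemma EdgeSolution.integrableOn_Ioi {ν : ℝ} {f : ℝ → ℝ} (S : EdgeSolution ν f) (a : ℝ) :
    IntegrableOn f (Ioi a) := by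
  obtain ⟨C, -, h⟩ := EdgeSolution.exists_abs_le_exp
  refine integrable_of_isBigO_exp_neg (b := 1 / 4) (by norm_num) S.continuous.continuousOn
    (Asymptotics.IsBigO.of_bound C ?_)
  filter_upwards [eventually_ge_atTop (-2)] with x hx
  rw [Real.norm_eq_abs, Real.norm_eq_abs, Real.abs_exp]
  convert (h S hx).1 using 3
  ring

section TwelfthRoot

/-- The scale `n^{1/12}`: every power of `n` in the soft-edge scaling is a natural power of it. -/
noncomputable def twelfthRoot (n : ℕ) : ℝ := (n : ℝ) ^ ((1 : ℝ) / 12)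

variable {n : ℕ}

lemma one_le_twelfthRoot (hn : 1 ≤ n) : 1 ≤ twelfthRoot n :=
  Real.one_le_rpow (by exact_mod_cast hn) (by norm_num)

lemma twelfthRoot_pow (n k : ℕ) : twelfthRoot n ^ k = (n : ℝ) ^ ((k : ℝ) / 12) := by
  rw [twelfthRoot, ← Real.rpow_mul_natCast n.cast_nonneg]
  ring_nf

lemma twelfthRoot_pow_twelve (n : ℕ) : twelfthRoot n ^ 12 = n := by
  norm_num [twelfthRoot_pow]

lemma rpow_one_third_eq (n : ℕ) : (n : ℝ) ^ ((1 : ℝ) / 3) = twelfthRoot n ^ 4 := by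
  norm_num [twelfthRoot_pow]

lemma sqrt_eq_twelfthRoot_pow (n : ℕ) : √(n : ℝ) = twelfthRoot n ^ 6 := by
  norm_num [twelfthRoot_pow, Real.sqrt_eq_rpow]

lemma rpow_neg_one_sixth_eq (n : ℕ) : (n : ℝ) ^ (-(1 : ℝ) / 6) = (twelfthRoot n ^ 2)⁻¹ := by
  rw [twelfthRoot_pow, ← Real.rpow_neg n.cast_nonneg]
  norm_num

lemma psiUp_eq (n m : ℕ) (x : ℝ) : psiUp n m x =
    twelfthRoot n * osc m (2 * twelfthRoot n ^ 6 + x / twelfthRoot n ^ 2) := by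
  rw [psiUp, sqrt_eq_twelfthRoot_pow, rpow_neg_one_sixth_eq, div_eq_inv_mul x, twelfthRoot]

lemma psiN_eq (n : ℕ) :
    psiN n = fun x => twelfthRoot n * osc n (2 * twelfthRoot n ^ 6 + x / twelfthRoot n ^ 2) :=
  funext (psiUp_eq n n)

lemma hasDerivAt_comp_scaling {g : ℝ → ℝ} {g' : ℝ} (p x : ℝ)
    (hg : HasDerivAt g g' (2 * p ^ 6 + x / p ^ 2)) :
    HasDerivAt (fun x => g (2 * p ^ 6 + x / p ^ 2)) (g' * (1 / p ^ 2)) x :=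
  hg.comp x (((hasDerivAt_id x).div_const _).const_add _)

lemma edgePotential_twelfthRoot (hn : 1 ≤ n) (x : ℝ) : edgePotential (twelfthRoot n ^ 4) x =
    ((2 * twelfthRoot n ^ 6 + x / twelfthRoot n ^ 2) ^ 2 / 4 - n - 1 / 2) / twelfthRoot n ^ 4 := by
  have := one_le_twelfthRoot hn
  rw [edgePotential, ← twelfthRoot_pow_twelve n]
  field_simp
  ring

lemma scaling_center (hn : 1 ≤ n) :
    2 * twelfthRoot n ^ 6 + -(2 * (twelfthRoot n ^ 4) ^ 2) / twelfthRoot n ^ 2 = 0 := by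
  have := one_le_twelfthRoot hn
  field_simp
  ring

lemma tendsto_scaling (hn : 1 ≤ n) :
    Tendsto (fun x => 2 * twelfthRoot n ^ 6 + x / twelfthRoot n ^ 2) atTop atTop := by
  have := one_le_twelfthRoot hn
  exact tendsto_atTop_add_const_left _ _ (tendsto_id.atTop_div_const (by positivity))

lemma hasDerivAt_psiN (hn : 1 ≤ n) (x : ℝ) : HasDerivAt (psiN n) (1 / twelfthRoot n *
    deriv (osc n) (2 * twelfthRoot n ^ 6 + x / twelfthRoot n ^ 2)) x := by
  have := one_le_twelfthRoot hn
  rw [psiN_eq]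
  refine ((hasDerivAt_comp_scaling _ x (hasDerivAt_osc n _)).const_mul _).congr_deriv ?_
  field_simp

lemma deriv_psiN (hn : 1 ≤ n) : deriv (psiN n) = fun x => 1 / twelfthRoot n *
    deriv (osc n) (2 * twelfthRoot n ^ 6 + x / twelfthRoot n ^ 2) :=
  funext fun x => (hasDerivAt_psiN hn x).deriv

lemma hasDerivAt_deriv_psiN (hn : 1 ≤ n) (x : ℝ) :
    HasDerivAt (deriv (psiN n)) (edgePotential (twelfthRoot n ^ 4) x * psiN n x) x := by
  have := one_le_twelfthRoot hn
  rw [deriv_psiN hn, edgePotential_twelfthRoot hn, psiN_eq]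
  refine ((hasDerivAt_comp_scaling _ x (hasDerivAt_deriv_osc n _)).const_mul _).congr_deriv ?_
  field_simp

lemma psiN_center_sq_le (hn : 1 ≤ n) (heven : Even n) :
    psiN n (-(2 * (twelfthRoot n ^ 4) ^ 2)) ^ 2 ≤ 1 / twelfthRoot n ^ 4 := by
  have := one_le_twelfthRoot hn
  have hosc : (osc n 0 ^ 2 * twelfthRoot n ^ 6) ^ 2 ≤ 1 ^ 2 := by
    calc (osc n 0 ^ 2 * twelfthRoot n ^ 6) ^ 2 = osc n 0 ^ 4 * twelfthRoot n ^ 12 := by ring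
      _ = osc n 0 ^ 4 * n := by rw [twelfthRoot_pow_twelve]
      _ ≤ 1 ^ 2 := by linarith [osc_zero_pow_four_mul_le heven]
  simp only [psiN_eq, scaling_center hn]
  rw [le_div_iff₀ (by positivity)]
  linarith [(sq_le_sq₀ (by positivity) zero_le_one).1 hosc]

lemma edgeSolution_psiN (hn : 1 ≤ n) (heven : Even n) :
    EdgeSolution (twelfthRoot n ^ 4) (psiN n) where
  one_le := one_le_pow₀ (one_le_twelfthRoot hn)
  differentiable x := (hasDerivAt_psiN hn x).differentiableAt
  hasDerivAt_deriv := hasDerivAt_deriv_psiN hn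
  sq_center_le := psiN_center_sq_le hn heven
  deriv_center := by simp only [deriv_psiN hn, scaling_center hn, deriv_osc_zero heven, mul_zero]
  tendsto_mul_deriv := by
    have := one_le_twelfthRoot hn
    refine ((tendsto_osc_mul_deriv_osc n).comp (tendsto_scaling hn)).congr fun x => ?_
    rw [deriv_psiN hn, psiN_eq, Function.comp_apply]
    field_simp
  tendsto_deriv_sq_sub := by
    have := one_le_twelfthRoot hn
    have h := ((tendsto_deriv_osc_sq_sub n).comp (tendsto_scaling hn)).const_mul
      (1 / twelfthRoot n ^ 2)
    rw [mul_zero] at h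
    refine h.congr fun x => ?_
    rw [deriv_psiN hn, psiN_eq, Function.comp_apply, edgePotential_twelfthRoot hn]
    field_simp

lemma psiUp_pred_eq (hn : 1 ≤ n) (x : ℝ) : psiUp n (n - 1) x =
    deriv (psiN n) x / twelfthRoot n ^ 4 + edgeSlope (twelfthRoot n ^ 4) x * psiN n x := by
  have := one_le_twelfthRoot hn
  have hsqrt := sqrt_eq_twelfthRoot_pow n
  rw [deriv_psiN hn, psiN_eq, psiUp_eq]
  obtain ⟨k, rfl⟩ := Nat.exists_eq_add_of_le' hn
  rw [Nat.cast_succ] at hsqrt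
  simp only [Nat.add_sub_cancel]
  rw [deriv_osc_succ, hsqrt, edgeSlope]
  field_simp
  ring

lemma psiN_reflect (hn : 1 ≤ n) (heven : Even n) (x : ℝ) :
    psiN n (2 * -(2 * (twelfthRoot n ^ 4) ^ 2) - x) = psiN n x := by
  have := one_le_twelfthRoot hn
  simp only [psiN_eq]
  rw [← osc_neg heven]
  congr 2
  field_simp
  ring

lemma epsPsi_eq (hn : 1 ≤ n) (heven : Even n) (y : ℝ) :
    epsPsi n y = ∫ v in (-(2 * (twelfthRoot n ^ 4) ^ 2))..y, psiN n v :=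
  have hreflect := psiN_reflect hn heven
  epsF_eq_integral_of_reflect hreflect
    (integrable_of_reflect hreflect ((edgeSolution_psiN hn heven).integrableOn_Ioi _)) y

end TwelfthRoot

section Majorant

variable {A B X Y s x y : ℝ}

/-- The majorant of `|L₁ⁿ(x, y)|` in terms of `X = edgeWeight x`, `Y = edgeWeight y` and
`s = |x - y|`. -/
noncomputable def weightMajorant (X Y s : ℝ) : ℝ :=
  2 * (Y / X + X / Y) ^ 2 / s ^ 2 + (Y / X + X / Y) * (1 / X + 1 / Y) / s + 2 / (X * Y)
    + 2 * (Y ^ 3 / X + X ^ 3 / Y) / s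

/-- The sum of the six `Ĝ` in the theorem, as a function of `A = |x| ^ (1 / 4)`,
`B = |y| ^ (1 / 4)` and `s = |x - y|`. -/
noncomputable def ghatSum (A B s : ℝ) : ℝ :=
  (A / B ^ 2 + B / A ^ 2) / s + (1 / A + 1 / B) / s + 2 / (A * B) + (A ^ 3 / B + B ^ 3 / A) / s
    + (A ^ 2 / B ^ 2 + B ^ 2 / A ^ 2) / s ^ 2 + 2 / s ^ 2

/-- The homogeneous counterpart of `edgeWeight`. -/
noncomputable def absRoot (x : ℝ) : ℝ := |x| ^ ((1 : ℝ) / 4)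

lemma absRoot_pos (hx : x ≠ 0) : 0 < absRoot x := Real.rpow_pos_of_pos (abs_pos.2 hx) _

lemma absRoot_pow_four (x : ℝ) : absRoot x ^ 4 = |x| := by
  rw [absRoot, ← Real.rpow_mul_natCast (abs_nonneg x)]
  norm_num

lemma abs_rpow_div_four (x : ℝ) (k : ℤ) : |x| ^ ((k : ℝ) / 4) = absRoot x ^ k := by
  rw [absRoot, ← Real.rpow_mul_intCast (abs_nonneg x)]
  ring_nf

lemma absRoot_le_edgeWeight (x : ℝ) : absRoot x ≤ edgeWeight x :=
  Real.rpow_le_rpow (abs_nonneg x) (by linarith) (by norm_num)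

lemma edgeWeight_le_two_mul_absRoot (hx : 1 ≤ |x|) : edgeWeight x ≤ 2 * absRoot x := by
  have : 0 ≤ absRoot x := Real.rpow_nonneg (abs_nonneg x) _
  refine le_of_pow_le_pow_left₀ (n := 4) (by norm_num) (by positivity) ?_
  rw [mul_pow, edgeWeight_pow_four, absRoot_pow_four]
  linarith

lemma weightMajorant_comm (X Y s : ℝ) : weightMajorant X Y s = weightMajorant Y X s := by
  simp only [weightMajorant]
  ring

lemma ghatSum_comm (A B s : ℝ) : ghatSum A B s = ghatSum B A s := by
  simp only [ghatSum]
  ring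

lemma weightMajorant_le_of_large (hA : 0 < A) (hB : 0 < B) (hAX : A ≤ X) (hXA : X ≤ 2 * A)
    (hBY : B ≤ Y) (hYB : Y ≤ 2 * B) (hs : 0 < s) :
    weightMajorant X Y s ≤ 112 * ghatSum A B s := by
  have hX := hA.trans_le hAX
  have hY := hB.trans_le hBY
  calc weightMajorant X Y s = (2 * (Y ^ 2 / X ^ 2 + X ^ 2 / Y ^ 2) + 4) / s ^ 2
        + (Y / X ^ 2 + X / Y ^ 2 + 1 / X + 1 / Y) / s + 2 / (X * Y)
        + 2 * (Y ^ 3 / X + X ^ 3 / Y) / s := by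
        rw [weightMajorant]
        field_simp
        ring
    _ ≤ (2 * ((2 * B) ^ 2 / A ^ 2 + (2 * A) ^ 2 / B ^ 2) + 4) / s ^ 2
        + ((2 * B) / A ^ 2 + (2 * A) / B ^ 2 + 1 / A + 1 / B) / s + 2 / (A * B)
        + 2 * ((2 * B) ^ 3 / A + (2 * A) ^ 3 / B) / s := by gcongr
    _ = 8 * ((A ^ 2 / B ^ 2 + B ^ 2 / A ^ 2) / s ^ 2) + 2 * (2 / s ^ 2)
        + 2 * ((A / B ^ 2 + B / A ^ 2) / s) + 1 * ((1 / A + 1 / B) / s) + 1 * (2 / (A * B))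
        + 16 * ((A ^ 3 / B + B ^ 3 / A) / s) := by ring
    _ ≤ 112 * ((A ^ 2 / B ^ 2 + B ^ 2 / A ^ 2) / s ^ 2) + 112 * (2 / s ^ 2)
        + 112 * ((A / B ^ 2 + B / A ^ 2) / s) + 112 * ((1 / A + 1 / B) / s) + 112 * (2 / (A * B))
        + 112 * ((A ^ 3 / B + B ^ 3 / A) / s) := by gcongr <;> norm_num
    _ = 112 * ghatSum A B s := by
      rw [ghatSum]
      ring

lemma weightMajorant_le_of_bounded (hA : 0 < A) (hB : 0 < B) (hX : 1 ≤ X) (hX2 : X ≤ 2)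
    (hY : 1 ≤ Y) (hY2 : Y ≤ 2) (hs : 0 < s) (hs4 : s ≤ 4) :
    weightMajorant X Y s ≤ 112 * ghatSum A B s := by
  have : 0 < X := one_pos.trans_le hX
  have : 0 < Y := one_pos.trans_le hY
  calc weightMajorant X Y s ≤ 2 * (2 / 1 + 2 / 1) ^ 2 / s ^ 2
        + (2 / 1 + 2 / 1) * (1 / 1 + 1 / 1) / s + 2 / (1 * 1)
        + 2 * (2 ^ 3 / 1 + 2 ^ 3 / 1) / s := by
        rw [weightMajorant]
        gcongr
    _ = (32 + 40 * s + 2 * s ^ 2) / s ^ 2 := by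
      field_simp
      ring
    _ ≤ 224 / s ^ 2 := by
      gcongr
      nlinarith
    _ = 112 * (2 / s ^ 2) := by ring
    _ ≤ 112 * ghatSum A B s := by
      gcongr
      exact le_add_of_nonneg_left (by positivity)

lemma weightMajorant_le_of_separated (hA : 0 < A) (hA1 : A ≤ 1) (hB : 1 ≤ B) (hX : 1 ≤ X)
    (hX2 : X ≤ 2) (hBY : B ≤ Y) (hYB : Y ≤ 2 * B) (hs : B ^ 4 / 2 ≤ s) :
    weightMajorant X Y s ≤ 112 * ghatSum A B s := by
  have : 0 < X := one_pos.trans_le hX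
  have hB0 : 0 < B := one_pos.trans_le hB
  have : 0 < Y := hB0.trans_le hBY
  have : 0 < s := lt_of_lt_of_le (by positivity) hs
  have hY : 1 ≤ Y := hB.trans hBY
  have hXB : X ≤ 2 * B := by linarith
  calc weightMajorant X Y s ≤ 2 * (2 * B / 1 + 2 * B / 1) ^ 2 / (B ^ 4 / 2) ^ 2
        + (2 * B / 1 + 2 * B / 1) * (1 / 1 + 1 / 1) / (B ^ 4 / 2) + 2 / (1 * B)
        + 2 * ((2 * B) ^ 3 / 1 + (2 * B) ^ 3 / 1) / (B ^ 4 / 2) := by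
        rw [weightMajorant]
        gcongr
    _ = 128 / B ^ 6 + 16 / B ^ 3 + 66 / B ^ 1 := by
      field_simp
      ring
    _ ≤ 128 / B ^ 1 + 16 / B ^ 1 + 66 / B ^ 1 := by gcongr <;> first | exact hB | norm_num
    _ ≤ 112 * (2 / (1 * B)) := by
      field_simp
      norm_num
    _ ≤ 112 * (2 / (A * B)) := by gcongr
    _ ≤ 112 * ghatSum A B s := by
      gcongr
      rw [ghatSum, ← sub_nonneg]
      ring_nf
      positivity

lemma weightMajorant_le_ghatSum (hx : x ≠ 0) (hy : y ≠ 0) (hxy : x ≠ y) :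
    weightMajorant (edgeWeight x) (edgeWeight y) |x - y| ≤
      112 * ghatSum (absRoot x) (absRoot y) |x - y| := by
  wlog hle : |x| ≤ |y| generalizing x y
  · rw [weightMajorant_comm, ghatSum_comm, abs_sub_comm]
    exact this hy hx hxy.symm (le_of_not_ge hle)
  have hs : 0 < |x - y| := abs_pos.2 (sub_ne_zero.2 hxy)
  rcases le_or_gt 1 |x| with hx1 | hx1
  · exact weightMajorant_le_of_large (absRoot_pos hx) (absRoot_pos hy) (absRoot_le_edgeWeight x)
      (edgeWeight_le_two_mul_absRoot hx1) (absRoot_le_edgeWeight y)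
      (edgeWeight_le_two_mul_absRoot (hx1.trans hle)) hs
  have hX2 : edgeWeight x ≤ 2 := edgeWeight_le_two (by linarith)
  rcases le_or_gt |y| 2 with hy2 | hy2
  · exact weightMajorant_le_of_bounded (absRoot_pos hx) (absRoot_pos hy) (one_le_edgeWeight x) hX2
      (one_le_edgeWeight y) (edgeWeight_le_two hy2) hs (by linarith [abs_sub x y])
  · refine weightMajorant_le_of_separated (absRoot_pos hx)
      (Real.rpow_le_one (abs_nonneg x) hx1.le (by norm_num))
      (Real.one_le_rpow (by linarith) (by norm_num)) (one_le_edgeWeight x) hX2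
      (absRoot_le_edgeWeight y) (edgeWeight_le_two_mul_absRoot (by linarith)) ?_
    rw [absRoot_pow_four, abs_sub_comm]
    linarith [abs_sub_abs_le_abs_sub y x]

lemma ghatSum_eq (x y : ℝ) : ghatSum (absRoot x) (absRoot y) |x - y| =
    Ghat (-(1 : ℝ) / 4) ((1 : ℝ) / 2) 1 x y + Ghat 0 ((1 : ℝ) / 4) 1 x y
      + Ghat ((1 : ℝ) / 4) ((1 : ℝ) / 4) 0 x y + Ghat (-(3 : ℝ) / 4) ((1 : ℝ) / 4) 1 x y
      + Ghat (-(1 : ℝ) / 2) ((1 : ℝ) / 2) 2 x y + Ghat 0 0 2 x y := by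
  have hs1 : |x - y| ^ (-(1 : ℝ)) = |x - y|⁻¹ := Real.rpow_neg_one _
  have hs2 : |x - y| ^ (-(2 : ℝ)) = (|x - y| ^ 2)⁻¹ := by
    rw [Real.rpow_neg (abs_nonneg _), Real.rpow_two]
  simp only [Ghat, Gf, abs_sub_comm y x, hs1, hs2, neg_zero, Real.rpow_zero,
    show -(-(1 : ℝ) / 4) = (1 : ℤ) / 4 by norm_num, show -((1 : ℝ) / 2) = (-2 : ℤ) / 4 by norm_num,
    show -((1 : ℝ) / 4) = (-1 : ℤ) / 4 by norm_num, show -(-(3 : ℝ) / 4) = (3 : ℤ) / 4 by norm_num,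
    show -(-(1 : ℝ) / 2) = (2 : ℤ) / 4 by norm_num, abs_rpow_div_four, zpow_neg, zpow_ofNat]
  rw [ghatSum]
  ring

lemma mul_add_le_weightMajorant (hX : 1 ≤ X) (hY : 1 ≤ Y) (hs : 0 < s) :
    ((Y / X + X / Y) / s + 1 / X) * ((X / Y + Y / X) / s + 1 / Y)
      + ((Y ^ 3 / X + X * Y) / s + (Y / X + X / Y) / s ^ 2 + 1 / (X * Y)) ≤
      weightMajorant X Y s := by
  have hX0 : 0 < X := by linarith
  have hY0 : 0 < Y := by linarith
  have hratio : 1 ≤ Y / X + X / Y := by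
    rw [div_add_div _ _ hX0.ne' hY0.ne', le_div_iff₀ (by positivity)]
    nlinarith [sq_nonneg (X - Y)]
  have hcube : X * Y ≤ Y ^ 3 / X + X ^ 3 / Y := by
    rw [div_add_div _ _ hX0.ne' hY0.ne', le_div_iff₀ (by positivity)]
    nlinarith [sq_nonneg (X ^ 2 - Y ^ 2), sq_nonneg (X * Y)]
  have : 0 ≤ X ^ 3 / Y := by positivity
  calc ((Y / X + X / Y) / s + 1 / X) * ((X / Y + Y / X) / s + 1 / Y)
        + ((Y ^ 3 / X + X * Y) / s + (Y / X + X / Y) / s ^ 2 + 1 / (X * Y))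
      = ((Y / X + X / Y) ^ 2 + (Y / X + X / Y)) / s ^ 2 + (Y / X + X / Y) * (1 / X + 1 / Y) / s
        + 2 / (X * Y) + (Y ^ 3 / X + X * Y) / s := by
        rw [add_comm (X / Y)]
        generalize Y / X + X / Y = R
        field_simp
        ring
    _ ≤ weightMajorant X Y s := by
      rw [weightMajorant]
      gcongr
      · nlinarith
      · linarith

end Majorant

section MatrixKernel

/-- The lowering operator of the oscillator in edge coordinates: it maps `psiN n` to
`psiUp n (n - 1)`. -/
noncomputable def edgeLowering (ν : ℝ) (f : ℝ → ℝ) (x : ℝ) : ℝ :=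
  deriv f x / ν + edgeSlope ν x * f x

/-- The kernel `J₁ⁿ` built from a solution `f` of the edge equation, with both cases of the
Airy kernel written as one divided difference. -/
noncomputable def edgeJ (ν : ℝ) (f : ℝ → ℝ) (x y : ℝ) : ℝ :=
  -dslope (kernelNumerator f y) y x - 1 / (2 * ν) * (f x * f y)
    + 1 / 2 * edgeLowering ν f x * ∫ v in (-(2 * ν ^ 2))..y, f v

lemma edgeJ_of_ne {ν x y : ℝ} {f : ℝ → ℝ} (hxy : x ≠ y) : edgeJ ν f x y =
    kernelNumerator f x y / (x - y) - 1 / (2 * ν) * (f x * f y)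
      + 1 / 2 * edgeLowering ν f x * ∫ v in (-(2 * ν ^ 2))..y, f v := by
  rw [edgeJ, dslope_of_ne _ hxy, slope_def_field]
  simp only [kernelNumerator]
  ring

namespace EdgeSolution

variable {ν : ℝ} {f : ℝ → ℝ}

lemma continuous_edgeLowering (S : EdgeSolution ν f) : Continuous (edgeLowering ν f) :=
  (S.continuous_deriv.div_const ν).add ((continuous_edgeSlope ν).mul S.continuous)

lemma one_div_two_mul_le_one (S : EdgeSolution ν f) : 1 / (2 * ν) ≤ 1 := by
  have := S.one_le
  rw [div_le_one (by positivity)]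
  linarith

lemma exists_abs_edgeLowering_le : ∃ C > 0, ∀ ⦃ν : ℝ⦄ ⦃f : ℝ → ℝ⦄, EdgeSolution ν f →
    ∀ ⦃x⦄, -(2 * ν ^ 2) ≤ x → |edgeLowering ν f x| ≤ C / edgeWeight x := by
  obtain ⟨A, hA, ha⟩ := exists_abs_deriv_div_le
  obtain ⟨B, hB, hb⟩ := exists_abs_edgeSlope_mul_le
  refine ⟨A + B, by positivity, fun ν f S x hx => ?_⟩
  rw [add_div]
  exact (abs_add_le _ _).trans (add_le_add (ha S hx) (hb S hx))

lemma exists_abs_half_edgeLowering_mul_le : ∃ C > 0, ∀ ⦃ν : ℝ⦄ ⦃f : ℝ → ℝ⦄, EdgeSolution ν f →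
    ∀ ⦃x⦄, -(2 * ν ^ 2) ≤ x → ∀ ⦃b t : ℝ⦄, |t| ≤ b →
      |1 / 2 * edgeLowering ν f x * t| ≤ C * (b / edgeWeight x) := by
  obtain ⟨A, hA, ha⟩ := exists_abs_edgeLowering_le
  refine ⟨A, hA, fun ν f S x hx b t ht => ?_⟩
  have := edgeWeight_pos x
  calc |1 / 2 * edgeLowering ν f x * t| = 1 / 2 * |edgeLowering ν f x| * |t| := by
        rw [abs_mul, abs_mul, abs_of_nonneg (by norm_num : (0 : ℝ) ≤ 1 / 2)]
    _ ≤ 1 * (A / edgeWeight x) * b := by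
      gcongr
      exacts [by norm_num, ha S hx]
    _ = A * (b / edgeWeight x) := by ring

lemma exists_abs_edgeJ_le : ∃ C > 0, ∀ ⦃ν : ℝ⦄ ⦃f : ℝ → ℝ⦄, EdgeSolution ν f →
    ∀ ⦃x y⦄, -(2 * ν ^ 2) ≤ x → -(2 * ν ^ 2) ≤ y → x ≠ y → |edgeJ ν f x y| ≤
      C * ((edgeWeight y / edgeWeight x + edgeWeight x / edgeWeight y) / |x - y|
        + 1 / edgeWeight x) := by
  obtain ⟨K, hK, hk⟩ := exists_abs_kernelNumerator_le
  obtain ⟨A, hA, ha⟩ := exists_abs_le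
  obtain ⟨L, hL, hl⟩ := exists_abs_half_edgeLowering_mul_le
  obtain ⟨I, hI, hi⟩ := exists_abs_integral_le_const
  refine ⟨K + A ^ 2 + L * I, by positivity, fun ν f S x y hx hy hxy => ?_⟩
  have := edgeWeight_pos x
  have := edgeWeight_pos y
  have : 0 < |x - y| := abs_pos.2 (sub_ne_zero.2 hxy)
  have := S.pos
  have hquot : |kernelNumerator f x y / (x - y)| ≤
      K * (edgeWeight y / edgeWeight x + edgeWeight x / edgeWeight y) / |x - y| := by
    rw [abs_div]
    gcongr
    exact hk S hx hy
  have hprod : |1 / (2 * ν) * (f x * f y)| ≤ A ^ 2 / edgeWeight x :=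
    calc |1 / (2 * ν) * (f x * f y)| = 1 / (2 * ν) * (|f x| * |f y|) := by
          rw [abs_mul, abs_mul, abs_of_nonneg (by positivity : 0 ≤ 1 / (2 * ν))]
      _ ≤ 1 * (A / edgeWeight x * (A / 1)) := by
        gcongr
        exacts [S.one_div_two_mul_le_one, ha S hx,
          (ha S hy).trans (by gcongr; exact one_le_edgeWeight y)]
      _ = A ^ 2 / edgeWeight x := by ring
  have hlow := hl S hx (hi S le_rfl hy)
  rw [edgeJ_of_ne hxy]
  refine ((abs_add_le _ _).trans (add_le_add (abs_sub _ _) le_rfl)).trans ?_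
  have : 0 ≤ (A ^ 2 + L * I) * ((edgeWeight y / edgeWeight x + edgeWeight x / edgeWeight y)
    / |x - y|) + K * (1 / edgeWeight x) := by positivity
  linear_combination hquot + hprod + hlow + this

lemma hasDerivAt_edgeJ (S : EdgeSolution ν f) {x y : ℝ} (hxy : x ≠ y) :
    HasDerivAt (edgeJ ν f x)
      ((f x * (edgePotential ν y * f y) - deriv f x * deriv f y) / (x - y)
        + kernelNumerator f x y / (x - y) ^ 2 - 1 / (2 * ν) * (f x * deriv f y)
        + 1 / 2 * edgeLowering ν f x * f y) y := by
  have hne : x - y ≠ 0 := sub_ne_zero.2 hxy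
  have hderiv := (((S.hasDerivAt_kernelNumerator x y).div ((hasDerivAt_id y).const_sub x) hne).sub
    (((S.hasDerivAt y).const_mul (f x)).const_mul (1 / (2 * ν)))).add
    ((S.continuous.integral_hasStrictDerivAt (-(2 * ν ^ 2)) y).hasDerivAt.const_mul
      (1 / 2 * edgeLowering ν f x))
  refine (hderiv.congr_of_eventuallyEq ?_).congr_deriv ?_
  · filter_upwards [isOpen_ne.mem_nhds hxy.symm] with v hv
    exact edgeJ_of_ne hv.symm
  · simp only [id]
    field_simp
    ring

lemma exists_abs_deriv_edgeJ_le : ∃ C > 0, ∀ ⦃ν : ℝ⦄ ⦃f : ℝ → ℝ⦄, EdgeSolution ν f →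
    ∀ ⦃x y⦄, -(2 * ν ^ 2) ≤ x → -(2 * ν ^ 2) ≤ y → x ≠ y → |deriv (edgeJ ν f x) y| ≤
      C * ((edgeWeight y ^ 3 / edgeWeight x + edgeWeight x * edgeWeight y) / |x - y|
        + (edgeWeight y / edgeWeight x + edgeWeight x / edgeWeight y) / |x - y| ^ 2
        + 1 / (edgeWeight x * edgeWeight y)) := by
  obtain ⟨D, hD, hd⟩ := exists_abs_deriv_kernelNumerator_le
  obtain ⟨K, hK, hk⟩ := exists_abs_kernelNumerator_le
  obtain ⟨A, hA, ha⟩ := exists_abs_le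
  obtain ⟨B, hB, hb⟩ := exists_abs_deriv_div_le
  obtain ⟨L, hL, hl⟩ := exists_abs_half_edgeLowering_mul_le
  refine ⟨D + K + A * B + L * A, by positivity, fun ν f S x y hx hy hxy => ?_⟩
  have := edgeWeight_pos x
  have := edgeWeight_pos y
  have : 0 < |x - y| := abs_pos.2 (sub_ne_zero.2 hxy)
  have hquot : |(f x * (edgePotential ν y * f y) - deriv f x * deriv f y) / (x - y)| ≤
      D * (edgeWeight y ^ 3 / edgeWeight x + edgeWeight x * edgeWeight y) / |x - y| := by
    rw [abs_div]
    gcongr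
    exact hd S hx hy
  have hquot' : |kernelNumerator f x y / (x - y) ^ 2| ≤
      K * (edgeWeight y / edgeWeight x + edgeWeight x / edgeWeight y) / |x - y| ^ 2 := by
    rw [abs_div, abs_pow]
    gcongr
    exact hk S hx hy
  have hprod : |1 / (2 * ν) * (f x * deriv f y)| ≤ A * B / (edgeWeight x * edgeWeight y) :=
    calc |1 / (2 * ν) * (f x * deriv f y)| = 1 / 2 * (|f x| * |deriv f y / ν|) := by
          rw [show 1 / (2 * ν) * (f x * deriv f y) = 1 / 2 * (f x * (deriv f y / ν)) by ring,
            abs_mul, abs_mul, abs_of_nonneg (by norm_num : (0 : ℝ) ≤ 1 / 2)]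
      _ ≤ 1 * (A / edgeWeight x * (B / edgeWeight y)) := by
        gcongr
        exacts [by norm_num, ha S hx, hb S hy]
      _ = A * B / (edgeWeight x * edgeWeight y) := by rw [one_mul, div_mul_div_comm]
  have hlow := hl S hx (ha S hy)
  rw [div_div, mul_comm (edgeWeight y), ← mul_div_assoc] at hlow
  rw [(S.hasDerivAt_edgeJ hxy).deriv]
  refine ((abs_add_le _ _).trans (add_le_add ((abs_sub _ _).trans (add_le_add (abs_add_le _ _)
    le_rfl)) le_rfl)).trans ?_
  have : 0 ≤ (K + A * B + L * A)
        * ((edgeWeight y ^ 3 / edgeWeight x + edgeWeight x * edgeWeight y) / |x - y|)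
      + (D + A * B + L * A)
        * ((edgeWeight y / edgeWeight x + edgeWeight x / edgeWeight y) / |x - y| ^ 2)
      + (D + K) * (1 / (edgeWeight x * edgeWeight y)) := by positivity
  linear_combination hquot + hquot' + hprod + hlow + this

lemma integral_edgeJ (S : EdgeSolution ν f) (x y : ℝ) : ∫ u in x..y, edgeJ ν f u x =
    -(∫ u in x..y, dslope (kernelNumerator f x) x u) - 1 / (2 * ν) * f x * (∫ u in x..y, f u)
      + 1 / 2 * (∫ v in (-(2 * ν ^ 2))..x, f v) * ∫ u in x..y, edgeLowering ν f u := by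
  have hslope := S.continuous_dslope_kernelNumerator x
  have hlow := S.continuous_edgeLowering
  have hsplit : ∀ u, edgeJ ν f u x = -dslope (kernelNumerator f x) x u
      - 1 / (2 * ν) * f x * f u
      + 1 / 2 * (∫ v in (-(2 * ν ^ 2))..x, f v) * edgeLowering ν f u := fun u => by
    rw [edgeJ]
    ring
  simp only [hsplit]
  rw [intervalIntegral.integral_add, intervalIntegral.integral_sub, intervalIntegral.integral_neg,
    intervalIntegral.integral_const_mul, intervalIntegral.integral_const_mul]
  · exact hslope.neg.intervalIntegrable _ _
  · exact (S.continuous.const_mul _).intervalIntegrable _ _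
  · exact (hslope.neg.sub (S.continuous.const_mul _)).intervalIntegrable _ _
  · exact (hlow.const_mul _).intervalIntegrable _ _

lemma exists_abs_integral_edgeJ_le : ∃ C > 0, ∀ ⦃ν : ℝ⦄ ⦃f : ℝ → ℝ⦄, EdgeSolution ν f →
    ∀ ⦃x y⦄, -(2 * ν ^ 2) ≤ x → -(2 * ν ^ 2) ≤ y → |∫ u in x..y, edgeJ ν f u x| ≤ C := by
  obtain ⟨K, hK, hk⟩ := exists_abs_integral_dslope_kernelNumerator_le
  obtain ⟨A, hA, ha⟩ := exists_abs_le
  obtain ⟨I, hI, hi⟩ := exists_abs_integral_le_const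
  obtain ⟨L, hL, hl⟩ := exists_abs_integral_deriv_div_add_le
  refine ⟨K + A * I + I * L, by positivity, fun ν f S x y hx hy => ?_⟩
  have := S.pos
  have hfx : |f x| ≤ A := (ha S hx).trans (div_le_self hA.le (one_le_edgeWeight x))
  rw [S.integral_edgeJ]
  calc |-(∫ u in x..y, dslope (kernelNumerator f x) x u) - 1 / (2 * ν) * f x * (∫ u in x..y, f u)
        + 1 / 2 * (∫ v in (-(2 * ν ^ 2))..x, f v) * ∫ u in x..y, edgeLowering ν f u|
      ≤ |∫ u in x..y, dslope (kernelNumerator f x) x u|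
        + |1 / (2 * ν) * f x * (∫ u in x..y, f u)|
        + |1 / 2 * (∫ v in (-(2 * ν ^ 2))..x, f v) * ∫ u in x..y, edgeLowering ν f u| := by
        refine (abs_add_le _ _).trans (add_le_add ((abs_sub _ _).trans_eq ?_) le_rfl)
        rw [abs_neg]
    _ = |∫ u in x..y, dslope (kernelNumerator f x) x u|
        + 1 / (2 * ν) * |f x| * |∫ u in x..y, f u|
        + 1 / 2 * |∫ v in (-(2 * ν ^ 2))..x, f v| * |∫ u in x..y, edgeLowering ν f u| := by
      rw [abs_mul, abs_mul, abs_mul (1 / 2 * _), abs_mul (1 / 2),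
        abs_of_nonneg (by positivity : 0 ≤ 1 / (2 * ν)),
        abs_of_nonneg (by norm_num : (0 : ℝ) ≤ 1 / 2)]
    _ ≤ K + 1 * A * I + 1 * I * L := by
      gcongr
      exacts [hk S hx hy, S.one_div_two_mul_le_one, hi S hx hy, by norm_num, hi S le_rfl hx,
        hl S hx hy]
    _ = K + A * I + I * L := by ring

lemma exists_abs_edgeJ_scalar_part_le : ∃ C > 0, ∀ ⦃ν : ℝ⦄ ⦃f : ℝ → ℝ⦄, EdgeSolution ν f →
    ∀ ⦃x y⦄, -(2 * ν ^ 2) ≤ x → -(2 * ν ^ 2) ≤ y → x ≠ y →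
      |edgeJ ν f x y * edgeJ ν f y x - deriv (edgeJ ν f x) y
          * ((∫ u in x..y, edgeJ ν f u x) - 1 / 2 * Real.sign (y - x))| ≤
        C * weightMajorant (edgeWeight x) (edgeWeight y) |x - y| := by
  obtain ⟨A, hA, ha⟩ := exists_abs_edgeJ_le
  obtain ⟨D, hD, hd⟩ := exists_abs_deriv_edgeJ_le
  obtain ⟨I, hI, hi⟩ := exists_abs_integral_edgeJ_le
  refine ⟨A ^ 2 + D * (I + 1), by positivity, fun ν f S x y hx hy hxy => ?_⟩
  have := edgeWeight_pos x
  have := edgeWeight_pos y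
  have hs : 0 < |x - y| := abs_pos.2 (sub_ne_zero.2 hxy)
  have hxyJ := ha S hx hy hxy
  have hyxJ := ha S hy hx hxy.symm
  have hderiv := hd S hx hy hxy
  rw [abs_sub_comm y x] at hyxJ
  have hIntegral : |(∫ u in x..y, edgeJ ν f u x) - 1 / 2 * Real.sign (y - x)| ≤ I + 1 := by
    refine (abs_sub _ _).trans (add_le_add (hi S hx hy) ?_)
    rcases Real.sign_apply_eq (y - x) with h | h | h <;> rw [h] <;> norm_num
  refine le_trans ?_ (mul_le_mul_of_nonneg_left
    (mul_add_le_weightMajorant (one_le_edgeWeight x) (one_le_edgeWeight y) hs) (by positivity))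
  set P := (edgeWeight y / edgeWeight x + edgeWeight x / edgeWeight y) / |x - y| + 1 / edgeWeight x
  set Q := (edgeWeight x / edgeWeight y + edgeWeight y / edgeWeight x) / |x - y| + 1 / edgeWeight y
  set R := (edgeWeight y ^ 3 / edgeWeight x + edgeWeight x * edgeWeight y) / |x - y|
    + (edgeWeight y / edgeWeight x + edgeWeight x / edgeWeight y) / |x - y| ^ 2
    + 1 / (edgeWeight x * edgeWeight y)
  have : 0 ≤ P := by positivity
  have : 0 ≤ Q := by positivity
  have : 0 ≤ R := by positivity
  refine (abs_sub _ _).trans ?_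
  rw [abs_mul, abs_mul]
  calc _ ≤ A * P * (A * Q) + D * R * (I + 1) := by gcongr
    _ ≤ A * P * (A * Q) + D * R * (I + 1) + (A ^ 2 * R + D * (I + 1) * (P * Q)) :=
      le_add_of_nonneg_right (by positivity)
    _ = (A ^ 2 + D * (I + 1)) * (P * Q + R) := by ring

end EdgeSolution

lemma KAiN_eq {n : ℕ} (hn : 1 ≤ n) (heven : Even n) (x y : ℝ) :
    KAiN n x y = -dslope (kernelNumerator (psiN n) y) y x
      - 1 / (2 * twelfthRoot n ^ 4) * (psiN n x * psiN n y) := by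
  have S := edgeSolution_psiN hn heven
  rw [KAiN, rpow_one_third_eq]
  split_ifs with hxy
  · subst hxy
    rw [dslope_same, (S.hasDerivAt_kernelNumerator x x).deriv, (S.hasDerivAt_deriv x).deriv]
    ring
  · rw [dslope_of_ne _ hxy, slope_def_field]
    simp only [kernelNumerator]
    ring

lemma J1N_eq_edgeJ {n : ℕ} (hn : 1 ≤ n) (heven : Even n) :
    J1N n = edgeJ (twelfthRoot n ^ 4) (psiN n) := by
  ext x y
  rw [J1N, edgeJ, edgeLowering, KAiN_eq hn heven, psiUp_pred_eq hn, epsPsi_eq hn heven]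

lemma rpow_two_thirds_eq (n : ℕ) : (n : ℝ) ^ ((2 : ℝ) / 3) = (twelfthRoot n ^ 4) ^ 2 := by
  rw [← pow_mul, twelfthRoot_pow]
  norm_num

end MatrixKernel

/-- uniform bound on the scalar part `L₁ⁿ` of the quaternion product of
finite-`n` Airy₁ kernels (`n` even). -/
theorem L1N_bounds :
    ∃ C : ℝ, 0 < C ∧ ∀ n : ℕ, 2 ≤ n → Even n → ∀ x y : ℝ,
      -(2 * (n : ℝ) ^ ((2:ℝ)/3)) ≤ x → -(2 * (n : ℝ) ^ ((2:ℝ)/3)) ≤ y →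
      x ≠ y → x ≠ 0 → y ≠ 0 →
      |L1N n x y| ≤ C *
        (Ghat (-(1:ℝ)/4) ((1:ℝ)/2) 1 x y + Ghat 0 ((1:ℝ)/4) 1 x y +
          Ghat ((1:ℝ)/4) ((1:ℝ)/4) 0 x y + Ghat (-(3:ℝ)/4) ((1:ℝ)/4) 1 x y +
          Ghat (-(1:ℝ)/2) ((1:ℝ)/2) 2 x y + Ghat 0 0 2 x y) := by
  obtain ⟨C, hC, h⟩ := EdgeSolution.exists_abs_edgeJ_scalar_part_le
  refine ⟨C * 112, by positivity, fun n hn heven x y hx hy hxy hx0 hy0 => ?_⟩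
  have hn1 : 1 ≤ n := one_le_two.trans hn
  rw [rpow_two_thirds_eq] at hx hy
  calc |L1N n x y| ≤ C * weightMajorant (edgeWeight x) (edgeWeight y) |x - y| := by
        rw [L1N, J1N_eq_edgeJ hn1 heven]
        exact h (edgeSolution_psiN hn1 heven) hx hy hxy
    _ ≤ C * (112 * ghatSum (absRoot x) (absRoot y) |x - y|) := by
      gcongr
      exact weightMajorant_le_ghatSum hx0 hy0 hxy
    _ = _ := by rw [ghatSum_eq, mul_assoc]
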